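/- arXiv:2101.10251 — 3 statements merged into one kernel-verified Lean document; each statement's English description precedes it below -/
import Mathlib

section
/- Key Lemma for Hessian metrics with ∇α = 0: if ∇_iα_j = 0 at every point of Ω (equivalently the second Koszul form coincides with its dual, β = β'), then at every point of Ω the scalar curvature R satisfies (1/2)ΔR = |∇γ|² + |Rm|² + |Ric|² + Σ R_{ij}β_{ij}, where Σ R_{ij}β_{ij} = Σ g^{ii'}g^{jj'}R_{ij}β_{i'j'} and |∇γ|², |Rm|², |Ric|² are the squared g-norms of ∇γ, the curvature tensor and the Ricci tensor. -/
/-!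
The tensor `γ` with one index raised is an endomorphism-valued one-form: the Christoffel matrices
`C_l = (Γ^a_{lb})`. For such forms `∇_m C_l = ∂_m C_l + [C_m, C_l] - Γ^r_{ml} C_r`, and commutators
disappear under the trace form, so `|γ|² = g^{ij} tr(C_i C_j)` involves only one explicit factor of
the inverse metric.

Since `∇γ` is totally symmetric, `∇_m C_l = ∇_l C_m`, that is, the curvature matrices are
`F_{kl} = -[C_k, C_l]` (`Fm_eq`). With `∇α = 0` this gives `R_{jk} = tr(C_j C_k) - β_{jk}` and
`R = |γ|² - |α|²`, where `|α|²` has zero gradient. Hence (`lap_Scal`)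
`(1/2) ΔR = |∇γ|² + g^{ml} g^{ij} tr(∇_m ∇_l C_i · C_j)`.

In the last term `∇_m ∇_l C_i = ∇_m ∇_i C_l`, and the Ricci identity (`DDm_comm`) exchanges `∇_m`
and `∇_i`. The main term `g^{ml} ∇_i ∇_m C_l` vanishes, because `g^{ml} ∇_m C_l` is `∇α` with an
index raised (`contract_DDm`). The two curvature corrections are
`tr([F_{mi}, C_l] C_j) = -tr(F_{mi} F_{lj})`, which contracts to `|Rm|²` because `F` is skew, and
`-R^r_{lmi} tr(C_r C_j)`, which contracts to `⟨Ric, Ric + β⟩ = |Ric|² + ⟨Ric, β⟩`.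
-/

noncomputable section

/-- Partial derivative in the `i`-th coordinate direction. -/
def pd {n : ℕ} (i : Fin n) (f : (Fin n → ℝ) → ℝ) : (Fin n → ℝ) → ℝ :=
  fun x => fderiv ℝ f x (Pi.single i 1)

variable {n : ℕ}

/-- The Hessian metric `g_{ij} = ∂_i ∂_j φ`. -/
def gmet (φ : (Fin n → ℝ) → ℝ) (x : Fin n → ℝ) : Matrix (Fin n) (Fin n) ℝ :=
  fun i j => pd i (pd j φ) x

/-- The inverse metric `g^{ij}`. -/
def gi (φ : (Fin n → ℝ) → ℝ) (x : Fin n → ℝ) : Matrix (Fin n) (Fin n) ℝ :=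
  (gmet φ x)⁻¹

/-- The lowered difference tensor `γ_{ijk} = (1/2) ∂_i∂_j∂_k φ`. -/
def gam (φ : (Fin n → ℝ) → ℝ) (i j k : Fin n) : (Fin n → ℝ) → ℝ :=
  fun x => (1 / 2) * pd i (pd j (pd k φ)) x

/-- The Christoffel symbols `Γ^i_{jk} = Σ_p g^{ip} γ_{pjk}`. -/
def Chr (φ : (Fin n → ℝ) → ℝ) (i j k : Fin n) : (Fin n → ℝ) → ℝ :=
  fun x => ∑ p, gi φ x i p * gam φ p j k x

/-- The first Koszul form `α_i = Σ_{r,p} g^{rp} γ_{pri}`. -/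
def alph (φ : (Fin n → ℝ) → ℝ) (i : Fin n) : (Fin n → ℝ) → ℝ :=
  fun x => ∑ r, ∑ p, gi φ x r p * gam φ p r i x

/-- The second Koszul form `β_{ij} = ∂_i α_j`. -/
def bet (φ : (Fin n → ℝ) → ℝ) (i j : Fin n) : (Fin n → ℝ) → ℝ :=
  pd i (alph φ j)

/-- Covariant derivative of the first Koszul form `∇_i α_j`. -/
def covAlpha (φ : (Fin n → ℝ) → ℝ) (i j : Fin n) : (Fin n → ℝ) → ℝ :=
  fun x => bet φ i j x - ∑ r, Chr φ r i j x * alph φ r x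

/-- Covariant derivative of a covector field `∇_i X_j`. -/
def covCo (φ : (Fin n → ℝ) → ℝ) (X : Fin n → (Fin n → ℝ) → ℝ) (i j : Fin n) :
    (Fin n → ℝ) → ℝ :=
  fun x => pd i (X j) x - ∑ r, Chr φ r i j x * X r x

/-- The Hessian `∇_i∇_j f` of a function. -/
def covHess (φ f : (Fin n → ℝ) → ℝ) (i j : Fin n) : (Fin n → ℝ) → ℝ :=
  fun x => pd i (pd j f) x - ∑ r, Chr φ r i j x * pd r f x

/-- Covariant derivative of the difference tensor `∇_i γ_{jkl}`. -/
def covGam (φ : (Fin n → ℝ) → ℝ) (i j k l : Fin n) : (Fin n → ℝ) → ℝ :=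
  fun x => pd i (gam φ j k l) x -
    ∑ r, (Chr φ r i j x * gam φ r k l x + Chr φ r i k x * gam φ j r l x +
      Chr φ r i l x * gam φ j k r x)

/-- Second covariant derivative of the first Koszul form `∇_i∇_j α_k`. -/
def cov2Alpha (φ : (Fin n → ℝ) → ℝ) (i j k : Fin n) : (Fin n → ℝ) → ℝ :=
  fun x => pd i (covAlpha φ j k) x -
    ∑ r, (Chr φ r i j x * covAlpha φ r k x + Chr φ r i k x * covAlpha φ j r x)

/-- The curvature tensor `R^i_{jkl}`. -/
def Riem (φ : (Fin n → ℝ) → ℝ) (i j k l : Fin n) : (Fin n → ℝ) → ℝ :=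
  fun x => pd k (Chr φ i l j) x - pd l (Chr φ i k j) x +
    ∑ r, (Chr φ i k r x * Chr φ r l j x - Chr φ i l r x * Chr φ r k j x)

/-- The Ricci tensor `R_{jk} = Σ_s R^s_{jsk}`. -/
def Ricci (φ : (Fin n → ℝ) → ℝ) (j k : Fin n) : (Fin n → ℝ) → ℝ :=
  fun x => ∑ s, Riem φ s j s k x

/-- The scalar curvature `R = Σ g^{jk} R_{jk}`. -/
def Scal (φ : (Fin n → ℝ) → ℝ) : (Fin n → ℝ) → ℝ :=
  fun x => ∑ j, ∑ k, gi φ x j k * Ricci φ j k x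

/-- The Laplace–Beltrami operator of `g`. -/
def lap (φ u : (Fin n → ℝ) → ℝ) : (Fin n → ℝ) → ℝ :=
  fun x => ∑ i, ∑ j, gi φ x i j * (pd i (pd j u) x - ∑ k, Chr φ k i j x * pd k u x)

/-- `|α|²`. -/
def normAlphaSq (φ : (Fin n → ℝ) → ℝ) : (Fin n → ℝ) → ℝ :=
  fun x => ∑ i, ∑ j, gi φ x i j * alph φ i x * alph φ j x

/-- `|γ|²`. -/
def normGamSq (φ : (Fin n → ℝ) → ℝ) : (Fin n → ℝ) → ℝ :=
  fun x => ∑ i, ∑ i', ∑ j, ∑ j', ∑ k, ∑ k',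
    gi φ x i i' * gi φ x j j' * gi φ x k k' * gam φ i j k x * gam φ i' j' k' x

/-- `|∇γ|²`. -/
def normCovGamSq (φ : (Fin n → ℝ) → ℝ) : (Fin n → ℝ) → ℝ :=
  fun x => ∑ i, ∑ i', ∑ j, ∑ j', ∑ k, ∑ k', ∑ l, ∑ l',
    gi φ x i i' * gi φ x j j' * gi φ x k k' * gi φ x l l' *
      covGam φ i j k l x * covGam φ i' j' k' l' x

/-- `|Rm|²` (the upper index is lowered with `g`). -/
def normRmSq (φ : (Fin n → ℝ) → ℝ) : (Fin n → ℝ) → ℝ :=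
  fun x => ∑ i, ∑ i', ∑ j, ∑ j', ∑ k, ∑ k', ∑ l, ∑ l',
    gmet φ x i i' * gi φ x j j' * gi φ x k k' * gi φ x l l' *
      Riem φ i j k l x * Riem φ i' j' k' l' x

/-- `|Ric|²`. -/
def normRicSq (φ : (Fin n → ℝ) → ℝ) : (Fin n → ℝ) → ℝ :=
  fun x => ∑ j, ∑ j', ∑ k, ∑ k',
    gi φ x j j' * gi φ x k k' * Ricci φ j k x * Ricci φ j' k' x

/-- The full contraction `Σ R_{ij} β_{ij}`. -/
def ricBeta (φ : (Fin n → ℝ) → ℝ) : (Fin n → ℝ) → ℝ :=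
  fun x => ∑ i, ∑ i', ∑ j, ∑ j',
    gi φ x i i' * gi φ x j j' * Ricci φ i j x * bet φ i' j' x

/-- The full contraction `Σ R_{ij} ∇_i α_j`. -/
def ricCovAlpha (φ : (Fin n → ℝ) → ℝ) : (Fin n → ℝ) → ℝ :=
  fun x => ∑ i, ∑ i', ∑ j, ∑ j',
    gi φ x i i' * gi φ x j j' * Ricci φ i j x * covAlpha φ i' j' x

/-- The full contraction `Σ (∇_i∇_j α_k) γ_{ijk}`. -/
def cov2AlphaGam (φ : (Fin n → ℝ) → ℝ) : (Fin n → ℝ) → ℝ :=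
  fun x => ∑ i, ∑ i', ∑ j, ∑ j', ∑ k, ∑ k',
    gi φ x i i' * gi φ x j j' * gi φ x k k' * cov2Alpha φ i j k x * gam φ i' j' k' x

variable {n : ℕ}

/-! ### Calculus of smooth scalar and matrix fields -/

/-- Smoothness at a point. -/
abbrev Sm {n : ℕ} (f : (Fin n → ℝ) → ℝ) (x : Fin n → ℝ) : Prop :=
  ContDiffAt ℝ ((⊤ : ℕ∞) : WithTop ℕ∞) f x

/-- Entrywise smoothness at a point of a matrix field. -/
def SmM {n : ℕ} (M : (Fin n → ℝ) → Matrix (Fin n) (Fin n) ℝ) (x : Fin n → ℝ) : Prop :=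
  ∀ a b, Sm (fun y => M y a b) x

/-- Entrywise partial derivative of a matrix field. -/
def pdM {n : ℕ} (l : Fin n) (M : (Fin n → ℝ) → Matrix (Fin n) (Fin n) ℝ) :
    (Fin n → ℝ) → Matrix (Fin n) (Fin n) ℝ :=
  fun x => Matrix.of fun a b => pd l (fun y => M y a b) x

section calculus

variable {f f' : (Fin n → ℝ) → ℝ} {x : Fin n → ℝ}
  {M N : (Fin n → ℝ) → Matrix (Fin n) (Fin n) ℝ} {l m : Fin n}

lemma Sm.diff (hf : Sm f x) : DifferentiableAt ℝ f x :=
  ContDiffAt.differentiableAt hf (by simp)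

lemma Sm.pd (hf : Sm f x) (l : Fin n) : Sm (pd l f) x := by
  have h : ContDiffAt ℝ ((⊤ : ℕ∞) : WithTop ℕ∞) (fderiv ℝ f) x :=
    ContDiffAt.fderiv_right (m := ((⊤ : ℕ∞) : WithTop ℕ∞)) hf (by simp)
  exact h.clm_apply contDiffAt_const

lemma Sm.sum {ι : Type*} {s : Finset ι} {F : ι → (Fin n → ℝ) → ℝ}
    (h : ∀ i ∈ s, Sm (F i) x) : Sm (fun y => ∑ i ∈ s, F i y) x :=
  ContDiffAt.sum h

lemma pd_congr (h : f =ᶠ[nhds x] f') (l : Fin n) : pd l f x = pd l f' x := by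
  unfold pd; rw [h.fderiv_eq]

lemma pd_add (hf : Sm f x) (hf' : Sm f' x) :
    pd l (fun y => f y + f' y) x = pd l f x + pd l f' x := by
  unfold pd; rw [fderiv_fun_add hf.diff hf'.diff]; rfl

lemma pd_sub (hf : Sm f x) (hf' : Sm f' x) :
    pd l (fun y => f y - f' y) x = pd l f x - pd l f' x := by
  unfold pd; rw [fderiv_fun_sub hf.diff hf'.diff]; rfl

lemma pd_mul (hf : Sm f x) (hf' : Sm f' x) :
    pd l (fun y => f y * f' y) x = pd l f x * f' x + f x * pd l f' x := by
  unfold pd; rw [fderiv_fun_mul hf.diff hf'.diff]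
  simp [mul_comm, add_comm]

lemma pd_const (c : ℝ) : pd l (fun _ => c) x = 0 := by
  unfold pd; simp

lemma pd_sum {ι : Type*} {s : Finset ι} {F : ι → (Fin n → ℝ) → ℝ}
    (h : ∀ i ∈ s, Sm (F i) x) :
    pd l (fun y => ∑ i ∈ s, F i y) x = ∑ i ∈ s, pd l (F i) x := by
  unfold pd; rw [fderiv_fun_sum (fun i hi => (h i hi).diff)]; simp

lemma pd_comm (hf : Sm f x) (l m : Fin n) : pd l (pd m f) x = pd m (pd l f) x := by
  have hd : DifferentiableAt ℝ (fderiv ℝ f) x :=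
    (ContDiffAt.fderiv_right (m := ((⊤ : ℕ∞) : WithTop ℕ∞)) hf (by simp)).differentiableAt
      (by simp)
  have key : ∀ v w : Fin n → ℝ,
      fderiv ℝ (fun y => fderiv ℝ f y v) x w = fderiv ℝ (fderiv ℝ f) x w v := by
    intro v w
    rw [fderiv_clm_apply hd (differentiableAt_const v)]; simp
  have hs : IsSymmSndFDerivAt ℝ f x := ContDiffAt.isSymmSndFDerivAt hf (by
    simp only [minSmoothness_of_isRCLikeNormedField]
    exact WithTop.coe_le_coe.mpr (le_top : (2 : ℕ∞) ≤ ⊤))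
  unfold pd
  rw [key, key]
  exact hs _ _

lemma SmM.mul (hM : SmM M x) (hN : SmM N x) : SmM (fun y => M y * N y) x := by
  intro a b
  simp only [Matrix.mul_apply]
  exact Sm.sum fun i _ => (hM a i).mul (hN i b)

lemma SmM.add (hM : SmM M x) (hN : SmM N x) : SmM (fun y => M y + N y) x :=
  fun a b => (hM a b).add (hN a b)

lemma SmM.sub (hM : SmM M x) (hN : SmM N x) : SmM (fun y => M y - N y) x :=
  fun a b => (hM a b).sub (hN a b)

lemma SmM.fsmul (hf : Sm f x) (hM : SmM M x) : SmM (fun y => f y • M y) x :=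
  fun a b => hf.mul (hM a b)

lemma SmM.sum {F : Fin n → (Fin n → ℝ) → Matrix (Fin n) (Fin n) ℝ}
    (h : ∀ i, SmM (F i) x) : SmM (fun y => ∑ i, F i y) x := by
  intro a b
  simp only [Matrix.sum_apply]
  exact Sm.sum fun i _ => h i a b

lemma SmM.pdM (hM : SmM M x) (l : Fin n) : SmM (pdM l M) x :=
  fun a b => (hM a b).pd l

lemma SmM.trace (hM : SmM M x) : Sm (fun y => (M y).trace) x := by
  simp only [Matrix.trace, Matrix.diag]
  exact Sm.sum fun i _ => hM i i

lemma pdM_congr (h : M =ᶠ[nhds x] N) (l : Fin n) : pdM l M x = pdM l N x := by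
  ext a b
  exact pd_congr (h.mono fun y hy => by simp [hy]) l

lemma pdM_add (hM : SmM M x) (hN : SmM N x) :
    pdM l (fun y => M y + N y) x = pdM l M x + pdM l N x := by
  ext a b; exact pd_add (hM a b) (hN a b)

lemma pdM_sub (hM : SmM M x) (hN : SmM N x) :
    pdM l (fun y => M y - N y) x = pdM l M x - pdM l N x := by
  ext a b; exact pd_sub (hM a b) (hN a b)

lemma pdM_smul (hf : Sm f x) (hM : SmM M x) :
    pdM l (fun y => f y • M y) x = pd l f x • M x + f x • pdM l M x := by
  ext a b; exact pd_mul hf (hM a b)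

lemma pdM_sum {F : Fin n → (Fin n → ℝ) → Matrix (Fin n) (Fin n) ℝ}
    (h : ∀ i, SmM (F i) x) :
    pdM l (fun y => ∑ i, F i y) x = ∑ i, pdM l (F i) x := by
  ext a b
  simp only [pdM, Matrix.of_apply, Matrix.sum_apply]
  exact pd_sum fun i _ => h i a b

lemma pdM_mul (hM : SmM M x) (hN : SmM N x) :
    pdM l (fun y => M y * N y) x = pdM l M x * N x + M x * pdM l N x := by
  ext a b
  simp only [pdM, Matrix.of_apply, Matrix.add_apply, Matrix.mul_apply]
  rw [pd_sum fun i _ => (hM a i).mul (hN i b), ← Finset.sum_add_distrib]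
  exact Finset.sum_congr rfl fun i _ => pd_mul (hM a i) (hN i b)

lemma pd_trace (hM : SmM M x) : pd l (fun y => (M y).trace) x = (pdM l M x).trace := by
  simp only [Matrix.trace, Matrix.diag, pdM, Matrix.of_apply]
  exact pd_sum fun i _ => hM i i

lemma pdM_comm (hM : SmM M x) (l m : Fin n) : pdM l (pdM m M) x = pdM m (pdM l M) x := by
  ext a b; exact pd_comm (hM a b) l m

lemma Sm.det (hM : SmM M x) : Sm (fun y => (M y).det) x := by
  simp only [Matrix.det_apply]
  refine Sm.sum fun σ _ => ?_
  exact (contDiffAt_prod fun i _ => hM (σ i) i).const_smul _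

lemma SmM.inv (hM : SmM M x) (hdet : (M x).det ≠ 0) : SmM (fun y => (M y)⁻¹) x := by
  intro a b
  simp only [Matrix.inv_def, Ring.inverse_eq_inv', Matrix.smul_apply, smul_eq_mul,
    Matrix.adjugate_apply]
  refine ((Sm.det hM).inv hdet).mul (Sm.det ?_)
  intro c d
  by_cases h : c = b
  · subst h; simp only [Matrix.updateRow_self]; exact contDiffAt_const
  · simp only [Matrix.updateRow_ne h]; exact hM c d

end calculus

/-! ### The metric, its inverse and the Christoffel matrices -/

/-- The potential `φ` is smooth and defines a Hessian metric on the open set `Ω`. -/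
structure HessOn (φ : (Fin n → ℝ) → ℝ) (Ω : Set (Fin n → ℝ)) : Prop where
  smooth : ContDiff ℝ (⊤ : ℕ∞) φ
  isOpen : IsOpen Ω
  posDef : ∀ x ∈ Ω, (gmet φ x).PosDef

/-- The symmetric matrix `(γ_{l p b})_{p b}`. -/
def Gm (φ : (Fin n → ℝ) → ℝ) (l : Fin n) (x : Fin n → ℝ) : Matrix (Fin n) (Fin n) ℝ :=
  Matrix.of fun p b => gam φ l p b x

/-- The Christoffel matrix `C_l = (Γ^a_{l b})_{a b}`, the matrix of `γ` as an
endomorphism-valued one-form. -/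
def Cm (φ : (Fin n → ℝ) → ℝ) (l : Fin n) (x : Fin n → ℝ) : Matrix (Fin n) (Fin n) ℝ :=
  Matrix.of fun a b => Chr φ a l b x

/-- The symmetric matrix `(∇_m γ_{l a b})_{a b}`. -/
def Km (φ : (Fin n → ℝ) → ℝ) (m l : Fin n) (x : Fin n → ℝ) : Matrix (Fin n) (Fin n) ℝ :=
  Matrix.of fun a b => covGam φ m l a b x

/-- The covariant derivative `N_{m l} = ∇_m C_l` of the endomorphism-valued one-form `C`. -/
def Nm (φ : (Fin n → ℝ) → ℝ) (m l : Fin n) (x : Fin n → ℝ) : Matrix (Fin n) (Fin n) ℝ :=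
  pdM m (Cm φ l) x + (Cm φ m x * Cm φ l x - Cm φ l x * Cm φ m x)
    - ∑ r, Chr φ r m l x • Cm φ r x

/-- The second covariant derivative `∇_m ∇_l C_i`. -/
def DDm (φ : (Fin n → ℝ) → ℝ) (m l i : Fin n) (x : Fin n → ℝ) :
    Matrix (Fin n) (Fin n) ℝ :=
  pdM m (Nm φ l i) x + (Cm φ m x * Nm φ l i x - Nm φ l i x * Cm φ m x)
    - ∑ r, Chr φ r m i x • Nm φ l r x - ∑ r, Chr φ r m l x • Nm φ r i x

/-- The curvature matrix `F_{k l} = (R^a_{b k l})_{a b}`. -/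
def Fm (φ : (Fin n → ℝ) → ℝ) (k l : Fin n) (x : Fin n → ℝ) : Matrix (Fin n) (Fin n) ℝ :=
  Matrix.of fun a b => Riem φ a b k l x

namespace HessOn

variable {φ : (Fin n → ℝ) → ℝ} {Ω : Set (Fin n → ℝ)} {x : Fin n → ℝ}

lemma sm (H : HessOn φ Ω) (x : Fin n → ℝ) : Sm φ x := H.smooth.contDiffAt

lemma gmet_sm (H : HessOn φ Ω) (x : Fin n → ℝ) : SmM (gmet φ) x :=
  fun a b => ((H.sm x).pd b).pd a

lemma gmet_symm (H : HessOn φ Ω) (x : Fin n → ℝ) : (gmet φ x).transpose = gmet φ x := by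
  ext a b; exact pd_comm (H.sm x) b a

lemma det_ne (H : HessOn φ Ω) (hx : x ∈ Ω) : (gmet φ x).det ≠ 0 :=
  (H.posDef x hx).det_pos.ne'

lemma gi_sm (H : HessOn φ Ω) (hx : x ∈ Ω) : SmM (gi φ) x :=
  (H.gmet_sm x).inv (H.det_ne hx)

lemma gi_transpose (H : HessOn φ Ω) (x : Fin n → ℝ) : (gi φ x).transpose = gi φ x := by
  unfold gi; rw [Matrix.transpose_nonsing_inv, H.gmet_symm]

lemma gi_symm (H : HessOn φ Ω) (x : Fin n → ℝ) (i j : Fin n) : gi φ x i j = gi φ x j i := by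
  conv_lhs => rw [← H.gi_transpose x]
  rfl

lemma gi_mul (H : HessOn φ Ω) (hx : x ∈ Ω) : gi φ x * gmet φ x = 1 :=
  Matrix.nonsing_inv_mul _ (isUnit_iff_ne_zero.mpr (H.det_ne hx))

lemma mul_gi (H : HessOn φ Ω) (hx : x ∈ Ω) : gmet φ x * gi φ x = 1 :=
  Matrix.mul_nonsing_inv _ (isUnit_iff_ne_zero.mpr (H.det_ne hx))

lemma gam_sm (H : HessOn φ Ω) (x : Fin n → ℝ) (i j k : Fin n) : Sm (gam φ i j k) x :=
  contDiffAt_const.mul ((((H.sm x).pd k).pd j).pd i)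

lemma gam_swap (H : HessOn φ Ω) (i j k : Fin n) : gam φ i j k = gam φ j i k := by
  funext x; unfold gam; rw [pd_comm ((H.sm x).pd k)]

lemma gam_swap' (H : HessOn φ Ω) (i j k : Fin n) : gam φ i j k = gam φ i k j := by
  have : pd j (pd k φ) = pd k (pd j φ) := funext fun x => pd_comm (H.sm x) j k
  funext x; unfold gam; rw [this]

lemma Gm_sm (H : HessOn φ Ω) (x : Fin n → ℝ) (l : Fin n) : SmM (Gm φ l) x :=
  fun a b => H.gam_sm x l a b

lemma Gm_transpose (H : HessOn φ Ω) (x : Fin n → ℝ) (l : Fin n) :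
    (Gm φ l x).transpose = Gm φ l x := by
  ext a b; simp only [Gm, Matrix.transpose_apply, Matrix.of_apply]; rw [H.gam_swap']

lemma Cm_eq (H : HessOn φ Ω) (l : Fin n) : Cm φ l = fun x => gi φ x * Gm φ l x := by
  funext x; ext a b
  simp only [Cm, Gm, Matrix.of_apply, Matrix.mul_apply, Chr]
  exact Finset.sum_congr rfl fun p _ => by rw [H.gam_swap p l b]

lemma Cm_sm (H : HessOn φ Ω) (hx : x ∈ Ω) (l : Fin n) : SmM (Cm φ l) x := by
  rw [H.Cm_eq]; exact (H.gi_sm hx).mul (H.Gm_sm x l)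

lemma Chr_sm (H : HessOn φ Ω) (hx : x ∈ Ω) (i j k : Fin n) : Sm (Chr φ i j k) x :=
  H.Cm_sm hx j i k

lemma Chr_symm (H : HessOn φ Ω) (i j k : Fin n) : Chr φ i j k = Chr φ i k j := by
  funext x; unfold Chr
  exact Finset.sum_congr rfl fun p _ => by rw [H.gam_swap' p j k]

lemma pdM_gmet (l : Fin n) : pdM l (gmet φ) x = (2 : ℝ) • Gm φ l x := by
  ext a b
  simp only [pdM, gmet, Gm, gam, Matrix.of_apply, Matrix.smul_apply, smul_eq_mul]
  change pd l (pd a (pd b φ)) x = _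
  ring

/-- Differentiating `g⁻¹ g = 1`: `∂_l g⁻¹ = -2 C_l g⁻¹`. -/
lemma pdM_gi (H : HessOn φ Ω) (hx : x ∈ Ω) (l : Fin n) :
    pdM l (gi φ) x = -(2 : ℝ) • (Cm φ l x * gi φ x) := by
  have h1 : pdM l (fun y => gi φ y * gmet φ y) x = 0 := by
    have : (fun y => gi φ y * gmet φ y) =ᶠ[nhds x] fun _ => 1 :=
      Filter.eventually_of_mem (H.isOpen.mem_nhds hx) fun y hy => H.gi_mul hy
    rw [pdM_congr this]
    ext a b; exact pd_const _
  rw [pdM_mul (H.gi_sm hx) (H.gmet_sm x), pdM_gmet] at h1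
  have h2 := congrArg (fun A => A * gi φ x) h1
  simp only [add_mul, zero_mul, mul_assoc, H.mul_gi hx, mul_one] at h2
  rw [eq_neg_of_add_eq_zero_left h2, H.Cm_eq]
  simp [mul_assoc]

/-- `g⁻¹ C_lᵀ = C_l g⁻¹`, since both are `g⁻¹ γ_l g⁻¹`. -/
lemma gi_Cm (H : HessOn φ Ω) (x : Fin n → ℝ) (l : Fin n) :
    gi φ x * (Cm φ l x).transpose = Cm φ l x * gi φ x := by
  rw [H.Cm_eq]
  simp only [Matrix.transpose_mul, H.Gm_transpose, H.gi_transpose, mul_assoc]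

lemma pd_gi (H : HessOn φ Ω) (hx : x ∈ Ω) (l i j : Fin n) :
    pd l (fun y => gi φ y i j) x
      = -∑ r, Chr φ i l r x * gi φ x r j - ∑ r, gi φ x i r * Chr φ j l r x := by
  have h := congrFun (congrFun (H.pdM_gi hx l) i) j
  have h' := congrFun (congrFun (H.gi_Cm x l) i) j
  simp only [Matrix.mul_apply, Matrix.smul_apply, smul_eq_mul, Matrix.transpose_apply, Cm,
    Matrix.of_apply, pdM] at h h'
  rw [h, h']; ring

/-- Metric compatibility: the derivative of a metric trace is the metric trace of the
covariant derivative. -/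
lemma pd_contract (H : HessOn φ Ω) (hx : x ∈ Ω) (l : Fin n)
    {P : Fin n → Fin n → (Fin n → ℝ) → ℝ} (hP : ∀ i j, Sm (P i j) x) :
    pd l (fun y => ∑ i, ∑ j, gi φ y i j * P i j y) x
      = ∑ i, ∑ j, gi φ x i j * (pd l (P i j) x - ∑ r, Chr φ r l i x * P r j x
          - ∑ r, Chr φ r l j x * P i r x) := by
  rw [pd_sum fun i _ => Sm.sum fun j _ => (H.gi_sm hx i j).mul (hP i j)]
  simp_rw [pd_sum fun j _ => (H.gi_sm hx _ j).mul (hP _ j), pd_mul (H.gi_sm hx _ _) (hP _ _),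
    H.pd_gi hx, mul_sub, sub_mul, neg_mul, Finset.sum_add_distrib, Finset.sum_sub_distrib,
    Finset.sum_neg_distrib, Finset.mul_sum, Finset.sum_mul]
  have e1 : ∑ i, ∑ j, ∑ r, Chr φ i l r x * gi φ x r j * P i j x
      = ∑ i, ∑ j, ∑ r, gi φ x i j * (Chr φ r l i x * P r j x) := by
    rw [Finset.sum_comm]
    conv_rhs => rw [Finset.sum_comm]
    refine Finset.sum_congr rfl fun j _ => ?_
    rw [Finset.sum_comm]
    exact Finset.sum_congr rfl fun i _ => Finset.sum_congr rfl fun r _ => by ring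
  have e2 : ∑ i, ∑ j, ∑ r, gi φ x i r * Chr φ j l r x * P i j x
      = ∑ i, ∑ j, ∑ r, gi φ x i j * (Chr φ r l j x * P i r x) := by
    refine Finset.sum_congr rfl fun i _ => ?_
    rw [Finset.sum_comm]
    exact Finset.sum_congr rfl fun i _ => Finset.sum_congr rfl fun r _ => by ring
  rw [e1, e2]; ring

/-! ### The covariant derivative of the Christoffel matrices -/

lemma Chr_gam (H : HessOn φ Ω) (x : Fin n → ℝ) (a b c d : Fin n) :
    ∑ r, Chr φ r a b x * gam φ r c d x = ∑ r, Chr φ r c d x * gam φ r a b x := by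
  simp only [Chr, Finset.sum_mul]
  rw [Finset.sum_comm]
  exact Finset.sum_congr rfl fun i _ => Finset.sum_congr rfl fun j _ => by
    rw [H.gi_symm x j i]; ring

lemma pd_gam (H : HessOn φ Ω) (x : Fin n → ℝ) (m l a b : Fin n) :
    pd m (gam φ l a b) x = (1 / 2) * pd m (pd l (pd a (pd b φ))) x := by
  have := pd_mul (l := m) (x := x) (f := fun _ => (1 / 2 : ℝ)) (f' := pd l (pd a (pd b φ)))
    contDiffAt_const ((((H.sm x).pd b).pd a).pd l)
  rw [pd_const, zero_mul, zero_add] at this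
  exact this

/-- Together with `covGam_swap23` and `covGam_swap34`: `∇γ` is totally symmetric. -/
lemma covGam_swap12 (H : HessOn φ Ω) (x : Fin n → ℝ) (m l a b : Fin n) :
    covGam φ m l a b x = covGam φ l m a b x := by
  unfold covGam
  rw [H.pd_gam, H.pd_gam, pd_comm (((H.sm x).pd b).pd a) m l]
  simp only [Finset.sum_add_distrib]
  have e1 : ∑ r, Chr φ r m a x * gam φ l r b x = ∑ r, Chr φ r l b x * gam φ m a r x := by
    calc _ = ∑ r, Chr φ r m a x * gam φ r l b x :=
          Finset.sum_congr rfl fun r _ => by rw [H.gam_swap l r b]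
      _ = _ := by
          rw [H.Chr_gam]
          exact Finset.sum_congr rfl fun r _ => by rw [H.gam_swap r m a, H.gam_swap' m r a]
  have e2 : ∑ r, Chr φ r m b x * gam φ l a r x = ∑ r, Chr φ r l a x * gam φ m r b x := by
    calc _ = ∑ r, Chr φ r m b x * gam φ r l a x :=
          Finset.sum_congr rfl fun r _ => by rw [H.gam_swap' l a r, H.gam_swap l r a]
      _ = _ := by
          rw [H.Chr_gam]
          exact Finset.sum_congr rfl fun r _ => by rw [H.gam_swap r m b]
  rw [e1, e2]
  simp only [H.Chr_symm _ l m]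
  ring

lemma covGam_swap34 (H : HessOn φ Ω) (x : Fin n → ℝ) (m l a b : Fin n) :
    covGam φ m l a b x = covGam φ m l b a x := by
  unfold covGam
  rw [H.gam_swap' l a b]
  congr 1
  refine Finset.sum_congr rfl fun r _ => ?_
  rw [H.gam_swap' r a b, H.gam_swap' l r b, H.gam_swap' l a r]; ring

lemma covGam_swap23 (H : HessOn φ Ω) (x : Fin n → ℝ) (m l a b : Fin n) :
    covGam φ m l a b x = covGam φ m a l b x := by
  unfold covGam
  rw [H.gam_swap l a b]
  congr 1
  refine Finset.sum_congr rfl fun r _ => ?_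
  rw [H.gam_swap r a b, H.gam_swap l r b, H.gam_swap l a r]; ring

lemma covGam_pairs (H : HessOn φ Ω) (x : Fin n → ℝ) (m l a b : Fin n) :
    covGam φ m l a b x = covGam φ a b m l x := by
  rw [H.covGam_swap23, H.covGam_swap12, H.covGam_swap34, H.covGam_swap23]

lemma Km_eq (m l : Fin n) (x : Fin n → ℝ) :
    Km φ m l x = pdM m (Gm φ l) x - ∑ r, Chr φ r m l x • Gm φ r x
      - (Cm φ m x).transpose * Gm φ l x - Gm φ l x * Cm φ m x := by
  ext a b
  simp only [Km, covGam, pdM, Gm, Cm, Matrix.sub_apply, Matrix.of_apply, Matrix.sum_apply,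
    Matrix.smul_apply, smul_eq_mul, Matrix.mul_apply, Matrix.transpose_apply,
    Finset.sum_add_distrib]
  simp only [mul_comm (gam φ l a _ x)]
  ring

/-- `∇_m C_l` is obtained from `∇_m γ_l` by raising an index. -/
lemma Nm_eq (H : HessOn φ Ω) (hx : x ∈ Ω) (m l : Fin n) :
    Nm φ m l x = gi φ x * Km φ m l x := by
  have hC : pdM m (Cm φ l) x
      = -(2 : ℝ) • (Cm φ m x * Cm φ l x) + gi φ x * pdM m (Gm φ l) x := by
    conv_lhs => rw [H.Cm_eq l]
    rw [pdM_mul (H.gi_sm hx) (H.Gm_sm x l), H.pdM_gi hx, H.Cm_eq l]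
    simp [mul_assoc]
  have e : ∀ r, Cm φ r x = gi φ x * Gm φ r x := fun r => congrFun (H.Cm_eq r) x
  have e1 : gi φ x * ((Cm φ m x).transpose * Gm φ l x) = Cm φ m x * Cm φ l x := by
    rw [← mul_assoc, H.gi_Cm, mul_assoc, ← e]
  have e2 : gi φ x * (Gm φ l x * Cm φ m x) = Cm φ l x * Cm φ m x := by
    rw [← mul_assoc, ← e]
  have e3 : gi φ x * ∑ r, Chr φ r m l x • Gm φ r x = ∑ r, Chr φ r m l x • Cm φ r x := by
    rw [Finset.mul_sum]
    exact Finset.sum_congr rfl fun r _ => by rw [mul_smul_comm, ← e]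
  rw [Nm, Km_eq, hC, mul_sub, mul_sub, mul_sub, e1, e2, e3, neg_smul, two_smul]
  abel

lemma Nm_symm (H : HessOn φ Ω) (hx : x ∈ Ω) (m l : Fin n) : Nm φ m l x = Nm φ l m x := by
  rw [H.Nm_eq hx, H.Nm_eq hx]
  congr 1
  ext a b; exact H.covGam_swap12 x m l a b

lemma Nm_sm (H : HessOn φ Ω) (hx : x ∈ Ω) (m l : Fin n) : SmM (Nm φ m l) x :=
  (((H.Cm_sm hx l).pdM m).add
    (((H.Cm_sm hx m).mul (H.Cm_sm hx l)).sub ((H.Cm_sm hx l).mul (H.Cm_sm hx m)))).sub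
    (SmM.sum fun r => SmM.fsmul (H.Chr_sm hx r m l) (H.Cm_sm hx r))

lemma alph_eq (H : HessOn φ Ω) (i : Fin n) : alph φ i = fun x => (Cm φ i x).trace := by
  funext x
  simp only [alph, Matrix.trace, Matrix.diag, Cm, Matrix.of_apply, Chr]
  exact Finset.sum_congr rfl fun r _ => Finset.sum_congr rfl fun p _ => by
    rw [H.gam_swap' p r i]

lemma alph_sm (H : HessOn φ Ω) (hx : x ∈ Ω) (i : Fin n) : Sm (alph φ i) x := by
  rw [H.alph_eq]; exact (H.Cm_sm hx i).trace

lemma trace_Nm (H : HessOn φ Ω) (hx : x ∈ Ω) (m l : Fin n) :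
    (Nm φ m l x).trace = covAlpha φ m l x := by
  unfold Nm covAlpha bet
  rw [Matrix.trace_sub, Matrix.trace_add, Matrix.trace_sub, Matrix.trace_mul_comm (Cm φ m x),
    sub_self, add_zero, H.alph_eq l, pd_trace (H.Cm_sm hx l), Matrix.trace_sum]
  simp only [Matrix.trace_smul, smul_eq_mul, fun r => congrFun (H.alph_eq r) x]

/-- The metric trace of `∇C` is `∇α` with one index raised, by total symmetry of `∇γ`. -/
lemma contract_Nm (H : HessOn φ Ω) (hca : ∀ x ∈ Ω, ∀ i j, covAlpha φ i j x = 0)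
    (hx : x ∈ Ω) (a b : Fin n) :
    ∑ m, ∑ l, gi φ x m l * Nm φ m l x a b = 0 := by
  have h0 : ∀ c, ∑ m, ∑ l, gi φ x m l * covGam φ m l c b x = 0 := by
    intro c
    rw [← hca x hx c b, ← H.trace_Nm hx, H.Nm_eq hx]
    simp only [Matrix.trace, Matrix.diag, Matrix.mul_apply, Km, Matrix.of_apply]
    exact Finset.sum_congr rfl fun i _ => Finset.sum_congr rfl fun j _ => by
      rw [H.covGam_pairs, H.covGam_swap34]
  have h1 : ∀ m l, gi φ x m l * Nm φ m l x a b
      = ∑ c, gi φ x a c * (gi φ x m l * covGam φ m l c b x) := by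
    intro m l
    rw [H.Nm_eq hx]
    simp only [Matrix.mul_apply, Km, Matrix.of_apply, Finset.mul_sum]
    exact Finset.sum_congr rfl fun c _ => by ring
  simp_rw [h1]
  calc _ = ∑ c, gi φ x a c * ∑ m, ∑ l, gi φ x m l * covGam φ m l c b x := by
        simp_rw [Finset.mul_sum]
        rw [Finset.sum_congr rfl fun m _ => Finset.sum_comm]
        rw [Finset.sum_comm]
    _ = 0 := by simp [h0]

/-! ### Curvature and the Ricci identity -/

lemma Fm_def (k l : Fin n) (x : Fin n → ℝ) :
    Fm φ k l x = pdM k (Cm φ l) x - pdM l (Cm φ k) x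
      + (Cm φ k x * Cm φ l x - Cm φ l x * Cm φ k x) := by
  ext a b
  simp only [Fm, Riem, pdM, Cm, Matrix.of_apply, Matrix.add_apply, Matrix.sub_apply,
    Matrix.mul_apply, Finset.sum_sub_distrib]

/-- The Hessian curvature identity: symmetry of `∇γ` makes the curvature algebraic in `γ`. -/
lemma Fm_eq (H : HessOn φ Ω) (hx : x ∈ Ω) (k l : Fin n) :
    Fm φ k l x = -(Cm φ k x * Cm φ l x - Cm φ l x * Cm φ k x) := by
  have h := H.Nm_symm hx k l
  simp only [Nm, H.Chr_symm _ l k] at h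
  have h2 := sub_left_injective h
  rw [Fm_def]
  have h3 : pdM k (Cm φ l) x = pdM l (Cm φ k) x + (Cm φ l x * Cm φ k x - Cm φ k x * Cm φ l x)
      - (Cm φ k x * Cm φ l x - Cm φ l x * Cm φ k x) := eq_sub_of_add_eq h2
  rw [h3]; abel

/-- The curvature endomorphisms are skew for the metric. -/
lemma Fm_skew (H : HessOn φ Ω) (hx : x ∈ Ω) (k l : Fin n) :
    Fm φ k l x * gi φ x = -(gi φ x * (Fm φ k l x).transpose) := by
  rw [H.Fm_eq hx]
  have e : ∀ i j, Cm φ i x * Cm φ j x * gi φ x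
      = gi φ x * ((Cm φ i x).transpose * (Cm φ j x).transpose) := by
    intro i j
    rw [mul_assoc, ← H.gi_Cm, ← mul_assoc, ← H.gi_Cm, mul_assoc]
  simp only [Matrix.transpose_neg, Matrix.transpose_sub, Matrix.transpose_mul, mul_neg, neg_neg,
    neg_mul, sub_mul, mul_sub, e]
  abel

/-- The Ricci identity for the endomorphism-valued one-form `C`. -/
lemma DDm_comm (H : HessOn φ Ω) (hx : x ∈ Ω) (m l i : Fin n) :
    DDm φ m l i x = DDm φ l m i x
      + (Fm φ m l x * Cm φ i x - Cm φ i x * Fm φ m l x)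
      - ∑ s, Riem φ s i m l x • Cm φ s x := by
  have hC := fun l => H.Cm_sm hx l
  have hG := fun a b c => H.Chr_sm hx a b c
  have hp : ∀ m l, pdM m (Nm φ l i) x = pdM m (pdM l (Cm φ i)) x
      + ((pdM m (Cm φ l) x * Cm φ i x + Cm φ l x * pdM m (Cm φ i) x)
        - (pdM m (Cm φ i) x * Cm φ l x + Cm φ i x * pdM m (Cm φ l) x))
      - (∑ r, pd m (Chr φ r l i) x • Cm φ r x + ∑ r, Chr φ r l i x • pdM m (Cm φ r) x) := by
    intro m l
    unfold Nm
    rw [pdM_sub (((hC i).pdM l).add (((hC l).mul (hC i)).sub ((hC i).mul (hC l))))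
        (SmM.sum fun r => SmM.fsmul (hG r l i) (hC r)),
      pdM_add ((hC i).pdM l) (((hC l).mul (hC i)).sub ((hC i).mul (hC l))),
      pdM_sub ((hC l).mul (hC i)) ((hC i).mul (hC l)), pdM_mul (hC l) (hC i),
      pdM_mul (hC i) (hC l), pdM_sum fun r => SmM.fsmul (hG r l i) (hC r)]
    simp_rw [pdM_smul (hG _ l i) (hC _), Finset.sum_add_distrib]
  have hs : ∀ m l, ∑ r, Chr φ r m i x • Nm φ l r x
      = ∑ r, Chr φ r m i x • pdM l (Cm φ r) x
        + (Cm φ l x * (∑ r, Chr φ r m i x • Cm φ r x)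
          - (∑ r, Chr φ r m i x • Cm φ r x) * Cm φ l x)
        - ∑ s, (∑ r, Chr φ s l r x * Chr φ r m i x) • Cm φ s x := by
    intro m l
    simp only [Nm, smul_sub, smul_add, Finset.sum_add_distrib, Finset.sum_sub_distrib,
      Finset.mul_sum, Finset.sum_mul, mul_smul_comm, smul_mul_assoc, Finset.smul_sum,
      Finset.sum_smul, smul_smul]
    congr 1
    rw [Finset.sum_comm]
    exact Finset.sum_congr rfl fun s _ => Finset.sum_congr rfl fun r _ => by rw [mul_comm]
  have hR : ∑ s, Riem φ s i m l x • Cm φ s x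
      = ∑ r, pd m (Chr φ r l i) x • Cm φ r x - ∑ r, pd l (Chr φ r m i) x • Cm φ r x
        + (∑ s, (∑ r, Chr φ s m r x * Chr φ r l i x) • Cm φ s x
          - ∑ s, (∑ r, Chr φ s l r x * Chr φ r m i x) • Cm φ s x) := by
    simp only [Riem, Finset.sum_sub_distrib, add_smul, sub_smul, Finset.sum_add_distrib]
  rw [hR, Fm_def]
  unfold DDm
  rw [hp, hp, hs, hs, pdM_comm (hC i) m l]
  simp only [H.Chr_symm _ l m]
  simp only [Nm]
  noncomm_ring

lemma DDm_swap (H : HessOn φ Ω) (hx : x ∈ Ω) (m l i : Fin n) :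
    DDm φ m l i x = DDm φ m i l x := by
  have h1 : pdM m (Nm φ l i) x = pdM m (Nm φ i l) x :=
    pdM_congr (Filter.eventually_of_mem (H.isOpen.mem_nhds hx) fun y hy => H.Nm_symm hy l i) m
  unfold DDm
  rw [h1, H.Nm_symm hx l i]
  simp only [fun r => H.Nm_symm hx l r, fun r => H.Nm_symm hx r i]
  abel

/-- Differentiating `g^{ml} ∇_m C_l = 0` gives `g^{ml} ∇_i ∇_m C_l = 0`. -/
lemma contract_DDm (H : HessOn φ Ω) (hca : ∀ x ∈ Ω, ∀ i j, covAlpha φ i j x = 0)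
    (hx : x ∈ Ω) (i : Fin n) : ∑ m, ∑ l, gi φ x m l • DDm φ i m l x = 0 := by
  have hV : ∑ m, ∑ l, gi φ x m l • Nm φ m l x = 0 := by
    ext a b
    simp only [Matrix.sum_apply, Matrix.smul_apply, smul_eq_mul, Matrix.zero_apply]
    exact H.contract_Nm hca hx a b
  have hc : ∑ m, ∑ l, gi φ x m l •
      (Cm φ i x * Nm φ m l x - Nm φ m l x * Cm φ i x) = 0 := by
    calc _ = Cm φ i x * (∑ m, ∑ l, gi φ x m l • Nm φ m l x)
          - (∑ m, ∑ l, gi φ x m l • Nm φ m l x) * Cm φ i x := by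
          simp only [Finset.mul_sum, Finset.sum_mul, mul_smul_comm, smul_mul_assoc, smul_sub,
            Finset.sum_sub_distrib]
      _ = 0 := by rw [hV]; simp
  have hd : ∑ m, ∑ l, gi φ x m l • (pdM i (Nm φ m l) x - ∑ r, Chr φ r i l x • Nm φ m r x
      - ∑ r, Chr φ r i m x • Nm φ r l x) = 0 := by
    ext a b
    have h1 := H.pd_contract hx i (P := fun m l y => Nm φ m l y a b)
      fun m l => H.Nm_sm hx m l a b
    have h2 : pd i (fun y => ∑ m, ∑ l, gi φ y m l * Nm φ m l y a b) x = 0 := by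
      rw [pd_congr (f' := fun _ => 0) (Filter.eventually_of_mem (H.isOpen.mem_nhds hx)
        fun y hy => H.contract_Nm hca hy a b), pd_const]
    rw [h2] at h1
    simp only [Matrix.sum_apply, Matrix.smul_apply, smul_eq_mul, Matrix.zero_apply,
      Matrix.sub_apply, pdM, Matrix.of_apply]
    rw [h1]
    exact Finset.sum_congr rfl fun m _ => Finset.sum_congr rfl fun l _ => by ring
  refine Eq.trans ?_ ((congrArg₂ (· + ·) hd hc).trans (add_zero 0))
  simp only [← Finset.sum_add_distrib, ← smul_add]
  refine Finset.sum_congr rfl fun m _ => Finset.sum_congr rfl fun l _ => ?_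
  congr 1
  unfold DDm
  abel

/-- `R_{jk} = tr(C_j C_k) - β_{jk}`; here `∇α = 0` gives `β_{jk} = Γ^r_{jk} α_r`. -/
lemma Ricci_eq (H : HessOn φ Ω) (hca : ∀ x ∈ Ω, ∀ i j, covAlpha φ i j x = 0)
    (hx : x ∈ Ω) (j k : Fin n) :
    Ricci φ j k x = (Cm φ j x * Cm φ k x).trace - bet φ j k x := by
  have hb : bet φ j k x = ∑ r, Chr φ r j k x * alph φ r x := sub_eq_zero.mp (hca x hx j k)
  have hR : ∀ s, Riem φ s j s k x = -(∑ r, Chr φ s s r x * Chr φ r k j x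
      - ∑ r, Chr φ s k r x * Chr φ r s j x) := by
    intro s
    have h := congrFun (congrFun (H.Fm_eq hx s k) s) j
    simpa only [Fm, Cm, Matrix.of_apply, Matrix.neg_apply, Matrix.sub_apply,
      Matrix.mul_apply] using h
  have e1 : ∑ s, ∑ r, Chr φ s s r x * Chr φ r k j x = bet φ j k x := by
    rw [hb, Finset.sum_comm]
    refine Finset.sum_congr rfl fun r _ => ?_
    rw [H.alph_eq r]
    simp only [Matrix.trace, Matrix.diag, Cm, Matrix.of_apply, Finset.mul_sum]
    exact Finset.sum_congr rfl fun s _ => by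
      rw [H.Chr_symm s s r, H.Chr_symm r k j, mul_comm]
  have e2 : ∑ s, ∑ r, Chr φ s k r x * Chr φ r s j x = (Cm φ j x * Cm φ k x).trace := by
    rw [Matrix.trace_mul_comm]
    simp only [Matrix.trace, Matrix.diag, Cm, Matrix.of_apply, Matrix.mul_apply]
    exact Finset.sum_congr rfl fun s _ => Finset.sum_congr rfl fun r _ => by
      rw [H.Chr_symm r s j]
  unfold Ricci
  simp_rw [hR, Finset.sum_neg_distrib, Finset.sum_sub_distrib]
  rw [e1, e2]; ring

/-! ### The Laplacian of the scalar curvature -/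

/-- The squared norm `|γ|² = g^{ij} tr(C_i C_j)`. -/
def gamSq (φ : (Fin n → ℝ) → ℝ) (y : Fin n → ℝ) : ℝ :=
  ∑ i, ∑ j, gi φ y i j * (Cm φ i y * Cm φ j y).trace

/-- With `∇α = 0`, the scalar curvature is `|γ|² - |α|²`. -/
lemma Scal_eq (H : HessOn φ Ω) (hca : ∀ x ∈ Ω, ∀ i j, covAlpha φ i j x = 0)
    (hx : x ∈ Ω) : Scal φ x
      = gamSq φ x - ∑ i, ∑ j, gi φ x i j * (alph φ i x * alph φ j x) := by
  have e : ∑ i, ∑ j, gi φ x i j * bet φ i j x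
      = ∑ i, ∑ j, gi φ x i j * (alph φ i x * alph φ j x) := by
    have hb : ∀ i j, bet φ i j x = ∑ r, Chr φ r i j x * alph φ r x :=
      fun i j => sub_eq_zero.mp (hca x hx i j)
    have hc : ∀ r, ∑ i, ∑ j, gi φ x i j * Chr φ r i j x = ∑ p, gi φ x r p * alph φ p x := by
      intro r
      simp only [alph, Chr, Finset.mul_sum]
      rw [Finset.sum_congr rfl fun i _ => Finset.sum_comm, Finset.sum_comm]
      refine Finset.sum_congr rfl fun p _ => Finset.sum_congr rfl fun i _ =>
        Finset.sum_congr rfl fun j _ => ?_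
      rw [H.gam_swap' p i j, H.gam_swap p j i, H.gam_swap' j p i]; ring
    calc _ = ∑ r, ∑ i, ∑ j, gi φ x i j * Chr φ r i j x * alph φ r x := by
          simp_rw [hb, Finset.mul_sum]
          rw [Finset.sum_congr rfl fun i _ => Finset.sum_comm, Finset.sum_comm]
          exact Finset.sum_congr rfl fun r _ => Finset.sum_congr rfl fun i _ =>
            Finset.sum_congr rfl fun j _ => by ring
      _ = ∑ r, (∑ p, gi φ x r p * alph φ p x) * alph φ r x := by
          refine Finset.sum_congr rfl fun r _ => ?_
          simp only [← hc, Finset.sum_mul]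
      _ = _ := Finset.sum_congr rfl fun r _ => by
          rw [Finset.sum_mul]; exact Finset.sum_congr rfl fun p _ => by ring
  unfold Scal gamSq
  simp_rw [H.Ricci_eq hca hx, mul_sub, Finset.sum_sub_distrib]
  rw [e]

lemma pd_alphSq (H : HessOn φ Ω) (hca : ∀ x ∈ Ω, ∀ i j, covAlpha φ i j x = 0)
    (hx : x ∈ Ω) (l : Fin n) :
    pd l (fun y => ∑ i, ∑ j, gi φ y i j * (alph φ i y * alph φ j y)) x = 0 := by
  rw [H.pd_contract hx l (P := fun i j y => alph φ i y * alph φ j y)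
    fun i j => (H.alph_sm hx i).mul (H.alph_sm hx j)]
  refine Finset.sum_eq_zero fun i _ => Finset.sum_eq_zero fun j _ => ?_
  have hb : ∀ i j, pd i (alph φ j) x = ∑ r, Chr φ r i j x * alph φ r x :=
    fun i j => sub_eq_zero.mp (hca x hx i j)
  rw [pd_mul (H.alph_sm hx i) (H.alph_sm hx j), hb, hb]
  simp only [Finset.sum_mul, Finset.mul_sum]
  rw [sub_sub, ← Finset.sum_add_distrib, ← Finset.sum_add_distrib, ← Finset.sum_sub_distrib]
  rw [Finset.sum_eq_zero, mul_zero]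
  intro r _; ring

/-- The Leibniz rule for the trace form: commutator terms drop out of the trace. -/
lemma trace_leibniz (A B C A' B' : Matrix (Fin n) (Fin n) ℝ) :
    ((A' + (C * A - A * C)) * B).trace + (A * (B' + (C * B - B * C))).trace
      = (A' * B + A * B').trace := by
  rw [← Matrix.trace_add]
  have : (A' + (C * A - A * C)) * B + A * (B' + (C * B - B * C))
      = A' * B + A * B' + (C * (A * B) - A * B * C) := by noncomm_ring
  rw [this, Matrix.trace_add, Matrix.trace_sub, Matrix.trace_mul_comm C, sub_self, add_zero]

lemma gi_sum_swap (H : HessOn φ Ω) (x : Fin n → ℝ) (P : Fin n → Fin n → ℝ) :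
    ∑ i, ∑ j, gi φ x i j * P i j = ∑ i, ∑ j, gi φ x i j * P j i := by
  rw [Finset.sum_comm]
  exact Finset.sum_congr rfl fun i _ => Finset.sum_congr rfl fun j _ => by
    rw [H.gi_symm x j i]

lemma pd_gamSq (H : HessOn φ Ω) (hx : x ∈ Ω) (l : Fin n) :
    pd l (gamSq φ) x = 2 * ∑ i, ∑ j, gi φ x i j * (Nm φ l i x * Cm φ j x).trace := by
  have h := H.pd_contract hx l (P := fun i j y => (Cm φ i y * Cm φ j y).trace)
    fun i j => ((H.Cm_sm hx i).mul (H.Cm_sm hx j)).trace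
  have e : ∀ i j, pd l (fun y => (Cm φ i y * Cm φ j y).trace) x
      - ∑ r, Chr φ r l i x * (Cm φ r x * Cm φ j x).trace
      - ∑ r, Chr φ r l j x * (Cm φ i x * Cm φ r x).trace
      = (Nm φ l i x * Cm φ j x).trace + (Nm φ l j x * Cm φ i x).trace := by
    intro i j
    rw [pd_trace ((H.Cm_sm hx i).mul (H.Cm_sm hx j)), pdM_mul (H.Cm_sm hx i) (H.Cm_sm hx j),
      ← trace_leibniz _ _ (Cm φ l x), Matrix.trace_mul_comm (Nm φ l j x)]
    simp only [Nm, sub_mul, mul_sub, Matrix.trace_sub, Finset.sum_mul, Finset.mul_sum,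
      Matrix.trace_sum, smul_mul_assoc, mul_smul_comm, Matrix.trace_smul, smul_eq_mul]
    ring
  change pd l (gamSq φ) x = _ at h
  rw [h]
  simp_rw [e, mul_add, Finset.sum_add_distrib]
  rw [H.gi_sum_swap x fun i j => (Nm φ l j x * Cm φ i x).trace]
  ring

/-- The covariant Hessian of `|γ|²`; the Christoffel term on the left supplies the correction of
the index `l` in `∇_m ∇_l C_i`. -/
lemma hess_gamSq (H : HessOn φ Ω) (hx : x ∈ Ω) (m l : Fin n) :
    pd m (pd l (gamSq φ)) x - ∑ k, Chr φ k m l x * pd k (gamSq φ) x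
      = 2 * ∑ i, ∑ j, gi φ x i j *
        ((DDm φ m l i x * Cm φ j x).trace + (Nm φ l i x * Nm φ m j x).trace) := by
  have hsm : ∀ i j, Sm (fun y => (Nm φ l i y * Cm φ j y).trace) x :=
    fun i j => ((H.Nm_sm hx l i).mul (H.Cm_sm hx j)).trace
  have h1 : pd m (pd l (gamSq φ)) x
      = 2 * pd m (fun y => ∑ i, ∑ j, gi φ y i j * (Nm φ l i y * Cm φ j y).trace) x := by
    rw [pd_congr (Filter.eventually_of_mem (H.isOpen.mem_nhds hx) fun y hy => H.pd_gamSq hy l),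
      pd_mul contDiffAt_const
        (Sm.sum fun i _ => Sm.sum fun j _ => (H.gi_sm hx i j).mul (hsm i j)), pd_const]
    ring
  have e : ∀ i j, pd m (fun y => (Nm φ l i y * Cm φ j y).trace) x
      - ∑ r, Chr φ r m i x * (Nm φ l r x * Cm φ j x).trace
      - ∑ r, Chr φ r m j x * (Nm φ l i x * Cm φ r x).trace
      = (DDm φ m l i x * Cm φ j x).trace + (Nm φ l i x * Nm φ m j x).trace
        + ∑ k, Chr φ k m l x * (Nm φ k i x * Cm φ j x).trace := by
    intro i j
    rw [pd_trace ((H.Nm_sm hx l i).mul (H.Cm_sm hx j)), pdM_mul (H.Nm_sm hx l i) (H.Cm_sm hx j),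
      ← trace_leibniz _ _ (Cm φ m x)]
    have hN : Nm φ m j x = pdM m (Cm φ j) x + (Cm φ m x * Cm φ j x - Cm φ j x * Cm φ m x)
      - ∑ r, Chr φ r m j x • Cm φ r x := rfl
    rw [hN]
    simp only [DDm, sub_mul, mul_sub, Matrix.trace_sub, Finset.sum_mul, Finset.mul_sum,
      Matrix.trace_sum, smul_mul_assoc, mul_smul_comm, Matrix.trace_smul, smul_eq_mul]
    ring
  rw [h1, H.pd_contract hx m hsm]
  simp_rw [e, H.pd_gamSq hx, mul_add, Finset.sum_add_distrib]
  have e3 : ∑ k, Chr φ k m l x * (2 * ∑ i, ∑ j, gi φ x i j * (Nm φ k i x * Cm φ j x).trace)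
      = 2 * ∑ i, ∑ j, gi φ x i j * ∑ k, Chr φ k m l x * (Nm φ k i x * Cm φ j x).trace := by
    simp_rw [Finset.mul_sum]
    rw [Finset.sum_comm]
    refine Finset.sum_congr rfl fun i _ => ?_
    rw [Finset.sum_comm]
    exact Finset.sum_congr rfl fun j _ => Finset.sum_congr rfl fun k _ => by ring
  rw [e3]; ring

/-- Half the Laplacian of the scalar curvature is the metric trace of `⟨∇∇γ, γ⟩ + ⟨∇γ, ∇γ⟩`,
because `|α|²` is locally constant. -/
lemma lap_Scal (H : HessOn φ Ω) (hca : ∀ x ∈ Ω, ∀ i j, covAlpha φ i j x = 0)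
    (hx : x ∈ Ω) : (1 / 2) * lap φ (Scal φ) x
      = ∑ m, ∑ l, gi φ x m l * ∑ i, ∑ j, gi φ x i j *
        ((DDm φ m l i x * Cm φ j x).trace + (Nm φ l i x * Nm φ m j x).trace) := by
  have hpd : ∀ l, ∀ y ∈ Ω, pd l (Scal φ) y = pd l (gamSq φ) y := by
    intro l y hy
    have h1 : Sm (gamSq φ) y := Sm.sum fun i _ => Sm.sum fun j _ =>
      (H.gi_sm hy i j).mul ((H.Cm_sm hy i).mul (H.Cm_sm hy j)).trace
    have h2 : Sm (fun y => ∑ i, ∑ j, gi φ y i j * (alph φ i y * alph φ j y)) y :=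
      Sm.sum fun i _ => Sm.sum fun j _ =>
        (H.gi_sm hy i j).mul ((H.alph_sm hy i).mul (H.alph_sm hy j))
    rw [pd_congr (Filter.eventually_of_mem (H.isOpen.mem_nhds hy)
      fun z hz => H.Scal_eq hca hz), pd_sub h1 h2, H.pd_alphSq hca hy, sub_zero]
  unfold lap
  have h2 : ∀ m l, pd m (pd l (Scal φ)) x = pd m (pd l (gamSq φ)) x := fun m l =>
    pd_congr (Filter.eventually_of_mem (H.isOpen.mem_nhds hx) (hpd l)) m
  simp_rw [h2, fun l => hpd l x hx, H.hess_gamSq hx]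
  rw [Finset.mul_sum]
  refine Finset.sum_congr rfl fun m _ => ?_
  rw [Finset.mul_sum]
  exact Finset.sum_congr rfl fun l _ => by ring

/-! ### Contraction of the curvature terms -/

lemma sum_rot3 {F : Fin n → Fin n → Fin n → ℝ} :
    ∑ a, ∑ b, ∑ c, F a b c = ∑ c, ∑ a, ∑ b, F a b c := by
  rw [Finset.sum_congr rfl fun a _ => Finset.sum_comm, Finset.sum_comm]

lemma sum_swap22 {F : Fin n → Fin n → Fin n → Fin n → ℝ} :
    ∑ a, ∑ b, ∑ c, ∑ d, F a b c d = ∑ c, ∑ d, ∑ a, ∑ b, F a b c d := by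
  rw [sum_rot3]
  exact Finset.sum_congr rfl fun c _ => sum_rot3

lemma sum_rot {F : Fin n → Fin n → Fin n → Fin n → Fin n → ℝ} :
    ∑ a, ∑ b, ∑ c, ∑ d, ∑ e, F a b c d e = ∑ e, ∑ a, ∑ b, ∑ c, ∑ d, F a b c d e := by
  rw [Finset.sum_congr rfl fun a _ => Finset.sum_congr rfl fun b _ => sum_rot3, sum_rot3]

/-- The metric inner product of two symmetric bilinear forms, as the trace of the product of
the associated endomorphisms. -/
lemma trace_four (h K K' : Matrix (Fin n) (Fin n) ℝ) (hh : h.transpose = h)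
    (hK' : K'.transpose = K') :
    ∑ k, ∑ k', ∑ l, ∑ l', h k k' * h l l' * (K k l * K' k' l')
      = ((h * K) * (h * K')).trace := by
  simp only [Matrix.trace, Matrix.diag, Matrix.mul_apply, Finset.sum_mul_sum]
  rw [Finset.sum_comm]
  refine Finset.sum_congr rfl fun k' _ => ?_
  rw [Finset.sum_comm]
  refine Finset.sum_congr rfl fun l _ => Finset.sum_congr rfl fun k _ =>
    Finset.sum_congr rfl fun l' _ => ?_
  have e1 : h k k' = h k' k := by conv_lhs => rw [← hh, Matrix.transpose_apply]
  have e2 : K' k' l' = K' l' k' := by conv_lhs => rw [← hK', Matrix.transpose_apply]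
  rw [e1, e2]; ring

lemma normCovGamSq_eq (H : HessOn φ Ω) (hx : x ∈ Ω) : normCovGamSq φ x
    = ∑ m, ∑ l, gi φ x m l * ∑ i, ∑ j, gi φ x i j * (Nm φ l i x * Nm φ m j x).trace := by
  unfold normCovGamSq
  rw [H.gi_sum_swap x fun m l => ∑ i, ∑ j, gi φ x i j * (Nm φ l i x * Nm φ m j x).trace]
  refine Finset.sum_congr rfl fun m _ => Finset.sum_congr rfl fun l _ => ?_
  rw [Finset.mul_sum]
  refine Finset.sum_congr rfl fun i _ => ?_
  rw [Finset.mul_sum]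
  refine Finset.sum_congr rfl fun j _ => ?_
  have hs : (Km φ l j x).transpose = Km φ l j x := by
    ext a b; exact H.covGam_swap34 x l j b a
  rw [H.Nm_eq hx, H.Nm_eq hx, ← trace_four _ _ _ (H.gi_transpose x) hs]
  simp only [Finset.mul_sum, Km, Matrix.of_apply]
  exact Finset.sum_congr rfl fun _ _ => Finset.sum_congr rfl fun _ _ =>
    Finset.sum_congr rfl fun _ _ => Finset.sum_congr rfl fun _ _ => by ring

/-- The inner product of two curvature endomorphisms is minus the trace of their product, by
skewness. -/
lemma trace_Fm (H : HessOn φ Ω) (hx : x ∈ Ω) (k l k' l' : Fin n) :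
    ∑ i, ∑ i', ∑ j, ∑ j', gmet φ x i i' * gi φ x j j' * (Riem φ i j k l x * Riem φ i' j' k' l' x)
      = -(Fm φ k l x * Fm φ k' l' x).trace := by
  have h : (Fm φ k l x * gi φ x * (Fm φ k' l' x).transpose * gmet φ x).trace
      = -(Fm φ k l x * Fm φ k' l' x).trace := by
    rw [mul_assoc (Fm φ k l x), ← neg_eq_iff_eq_neg.mpr (H.Fm_skew hx k' l'), mul_neg, neg_mul,
      ← mul_assoc, mul_assoc, H.gi_mul hx, mul_one, Matrix.trace_neg]
  rw [← h]
  simp only [Matrix.trace, Matrix.diag, Matrix.mul_apply, Fm, Matrix.of_apply,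
    Matrix.transpose_apply, Finset.sum_mul]
  refine Finset.sum_congr rfl fun i _ => Finset.sum_congr rfl fun i' _ => ?_
  rw [Finset.sum_comm]
  refine Finset.sum_congr rfl fun j _ => Finset.sum_congr rfl fun j' _ => ?_
  have := congrFun (congrFun (H.gmet_symm x) i) i'
  rw [Matrix.transpose_apply] at this
  rw [this]; ring

lemma normRmSq_eq (H : HessOn φ Ω) (hx : x ∈ Ω) : normRmSq φ x
    = ∑ m, ∑ l, gi φ x m l * ∑ i, ∑ j, gi φ x i j * -(Fm φ m i x * Fm φ l j x).trace := by
  unfold normRmSq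
  simp_rw [← H.trace_Fm hx, Finset.mul_sum]
  rw [sum_rot]
  refine Finset.sum_congr rfl fun k _ => ?_
  rw [sum_rot]
  refine Finset.sum_congr rfl fun k' _ => ?_
  rw [sum_rot]
  refine Finset.sum_congr rfl fun l _ => ?_
  rw [sum_rot]
  exact Finset.sum_congr rfl fun l' _ => Finset.sum_congr rfl fun _ _ =>
    Finset.sum_congr rfl fun _ _ => Finset.sum_congr rfl fun _ _ =>
    Finset.sum_congr rfl fun _ _ => by ring

/-- `g^{ml} R^r_{l m i} = -R_{si} g^{sr}`, by skewness of the curvature. -/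
lemma contract_Riem (H : HessOn φ Ω) (hx : x ∈ Ω) (r i : Fin n) :
    ∑ m, ∑ l, gi φ x m l * Riem φ r l m i x = -∑ s, gi φ x s r * Ricci φ s i x := by
  have h : ∀ m, ∑ l, gi φ x m l * Riem φ r l m i x
      = -∑ s, gi φ x s r * Riem φ m s m i x := by
    intro m
    have h := congrFun (congrFun (H.Fm_skew hx m i) m) r
    simp only [Matrix.neg_apply, Matrix.mul_apply, Fm, Matrix.of_apply,
      Matrix.transpose_apply] at h
    rw [← neg_eq_iff_eq_neg.mpr h]
    congr 1
    exact Finset.sum_congr rfl fun s _ => by ring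
  simp_rw [h, Finset.sum_neg_distrib, Ricci, Finset.mul_sum]
  rw [Finset.sum_comm]

/-- The part of the Ricci identity acting on the form index of `C` contributes
`⟨Ric, Ric + β⟩`. -/
lemma ric_terms (H : HessOn φ Ω) (hca : ∀ x ∈ Ω, ∀ i j, covAlpha φ i j x = 0)
    (hx : x ∈ Ω) : ∑ m, ∑ l, gi φ x m l * ∑ i, ∑ j, gi φ x i j *
      -∑ r, Riem φ r l m i x * (Cm φ r x * Cm φ j x).trace
      = normRicSq φ x + ricBeta φ x := by
  have hT : ∀ r j, (Cm φ r x * Cm φ j x).trace = Ricci φ r j x + bet φ r j x :=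
    fun r j => by rw [H.Ricci_eq hca hx]; ring
  have h1 : normRicSq φ x + ricBeta φ x = ∑ i, ∑ j, ∑ r,
      gi φ x i j * ((∑ s, gi φ x s r * Ricci φ s i x) * (Cm φ r x * Cm φ j x).trace) := by
    simp_rw [hT]
    unfold normRicSq ricBeta
    simp only [← Finset.sum_add_distrib, Finset.sum_mul, Finset.mul_sum]
    conv_rhs => rw [sum_swap22, Finset.sum_comm]
    exact Finset.sum_congr rfl fun s _ => Finset.sum_congr rfl fun r _ =>
      Finset.sum_congr rfl fun i _ => Finset.sum_congr rfl fun j _ => by ring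
  rw [h1]
  simp_rw [← neg_eq_iff_eq_neg.mpr (H.contract_Riem hx _ _)]
  simp only [Finset.mul_sum, Finset.sum_mul, ← Finset.sum_neg_distrib]
  rw [sum_swap22]
  refine Finset.sum_congr rfl fun i _ => Finset.sum_congr rfl fun j _ => ?_
  rw [sum_rot3]
  exact Finset.sum_congr rfl fun r _ => Finset.sum_congr rfl fun m _ =>
    Finset.sum_congr rfl fun l _ => by ring

end HessOn

theorem key_lemma_nabla_alpha_zero {n : ℕ} (hn : 1 ≤ n) (φ : (Fin n → ℝ) → ℝ)
    (hφ : ContDiff ℝ (⊤ : ℕ∞) φ) (Ω : Set (Fin n → ℝ)) (hΩ : IsOpen Ω)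
    (hconn : IsConnected Ω) (hpos : ∀ x ∈ Ω, (gmet φ x).PosDef)
    (hca : ∀ x ∈ Ω, ∀ i j, covAlpha φ i j x = 0) :
    ∀ x ∈ Ω,
      (1 / 2) * lap φ (Scal φ) x
        = normCovGamSq φ x + normRmSq φ x + normRicSq φ x + ricBeta φ x := by
  intro x hx
  have H : HessOn φ Ω := ⟨hφ, hΩ, hpos⟩
  have hT : ∀ m l i j, (DDm φ m l i x * Cm φ j x).trace = (DDm φ i m l x * Cm φ j x).trace
      + -(Fm φ m i x * Fm φ l j x).trace
      + -∑ r, Riem φ r l m i x * (Cm φ r x * Cm φ j x).trace := by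
    intro m l i j
    -- Cyclicity of the trace turns `tr([F_{mi}, C_l] C_j)` into `tr(F_{mi} [C_l, C_j])`.
    have hF : ((Fm φ m i x * Cm φ l x - Cm φ l x * Fm φ m i x) * Cm φ j x).trace
        = -(Fm φ m i x * Fm φ l j x).trace := by
      rw [H.Fm_eq hx l j, mul_neg, Matrix.trace_neg, neg_neg, sub_mul, mul_sub,
        Matrix.trace_sub, Matrix.trace_sub, mul_assoc, mul_assoc (Cm φ l x),
        Matrix.trace_mul_comm (Cm φ l x), mul_assoc]
    rw [H.DDm_swap hx m l i, H.DDm_comm hx m i l, sub_mul, add_mul, Matrix.trace_sub,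
      Matrix.trace_add, hF]
    simp only [Finset.sum_mul, Matrix.trace_sum, smul_mul_assoc, Matrix.trace_smul, smul_eq_mul]
    ring
  have h0 : ∑ m, ∑ l, gi φ x m l * ∑ i, ∑ j, gi φ x i j *
      (DDm φ i m l x * Cm φ j x).trace = 0 := by
    have h : ∀ i j, ∑ m, ∑ l, gi φ x m l * (DDm φ i m l x * Cm φ j x).trace = 0 := by
      intro i j
      have := congrArg (fun A => (A * Cm φ j x).trace) (H.contract_DDm hca hx i)
      simpa only [Finset.sum_mul, Matrix.trace_sum, smul_mul_assoc, Matrix.trace_smul,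
        smul_eq_mul, zero_mul, Matrix.trace_zero] using this
    calc _ = ∑ i, ∑ j, gi φ x i j *
          ∑ m, ∑ l, gi φ x m l * (DDm φ i m l x * Cm φ j x).trace := by
          simp_rw [Finset.mul_sum]
          rw [HessOn.sum_swap22]
          exact Finset.sum_congr rfl fun i _ => Finset.sum_congr rfl fun j _ =>
            Finset.sum_congr rfl fun m _ => Finset.sum_congr rfl fun l _ => by ring
      _ = 0 := by simp [h]
  rw [H.lap_Scal hca hx]
  -- `hT` matches its own right-hand side, so it is applied once, at the given indices.
  rw [Finset.sum_congr rfl fun m _ => Finset.sum_congr rfl fun l _ => congrArg _ <|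
    Finset.sum_congr rfl fun i _ => Finset.sum_congr rfl fun j _ =>
      congrArg (fun t => gi φ x i j * (t + _)) (hT m l i j)]
  simp_rw [mul_add, Finset.sum_add_distrib, mul_add, Finset.sum_add_distrib]
  rw [h0, ← H.normRmSq_eq hx, H.ric_terms hca hx, ← H.normCovGamSq_eq hx]
  ring

end
end

section
/- At every point of Ω, the squared g-norm of the curvature tensor of a Hessian metric satisfies |Rm|² = Σ (γ_{rpt}γ_{tir}γ_{pjk}γ_{ijk} + γ_{rpt}γ_{tij}γ_{rpk}γ_{ijk} − γ_{rjt}γ_{tip}γ_{rpk}γ_{ijk} − γ_{rkt}γ_{tip}γ_{rjp}γ_{ijk}), where in every term each repeated lower index pair is contracted with g^{··}. -/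
/-!
Near a point where `g` is invertible the Christoffel symbols are determined by
`∑ g_{ap} Γ^p_{lj} = γ_{alj}`. Differentiating this relation with `∂_k g_{ap} = 2 γ_{kap}`
(`sum_gmet_mul_pd_Chr`) avoids differentiating the inverse metric explicitly. Antisymmetrising in
`k, l` removes the derivatives of `γ`, which are fourth derivatives of `φ` and hence symmetric, and
leaves the lowered curvature tensor as an expression quadratic in `γ` (`sum_gmet_mul_Riem`):
`R_{ajkl} = ∑ g^{tt'} (γ_{alt} γ_{t'kj} - γ_{akt} γ_{t'lj})`.

The `g`-contraction in the upper index of `|Rm|²` is a `g⁻¹`-contraction of lowered tensors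
(`pairing_lower`), so `|Rm|²` expands into four complete contractions of four copies of `γ`. View
such a contraction as a graph with a vertex for each copy of `γ` and an edge for each contracted
index pair. The two squares give 4-cycles in which two opposite edges are doubled, and the two mixed
products give complete graphs on four vertices; the four terms of the formula are of the same two
types with the same signs, and an explicit renaming of the dummy indices matches them
(`contraction_identity`).
-/

noncomputable section

variable {n : ℕ}

variable {n : ℕ}

namespace HessianCurvature

open Finset

/-! ### Finite sums and complete contractions -/

/-- A twelvefold iterated sum as one sum over a product type. -/
lemma sum_twelve (f : Fin n → Fin n → Fin n → Fin n → Fin n → Fin n → Fin n → Fin n → Fin n →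
    Fin n → Fin n → Fin n → ℝ) :
    ∑ a, ∑ a', ∑ b, ∑ b', ∑ c, ∑ c', ∑ d, ∑ d', ∑ e, ∑ e', ∑ q, ∑ q',
      f a a' b b' c c' d d' e e' q q' =
    ∑ x : (Fin n × Fin n) × (Fin n × Fin n) × (Fin n × Fin n) × (Fin n × Fin n) ×
        (Fin n × Fin n) × (Fin n × Fin n),
      f x.1.1 x.1.2 x.2.1.1 x.2.1.2 x.2.2.1.1 x.2.2.1.2 x.2.2.2.1.1 x.2.2.2.1.2
        x.2.2.2.2.1.1 x.2.2.2.2.1.2 x.2.2.2.2.2.1 x.2.2.2.2.2.2 := by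
  simp only [Fintype.sum_prod_type]

lemma sum_eight_comm (f : Fin n → Fin n → Fin n → Fin n → Fin n → Fin n → Fin n → Fin n → ℝ) :
    ∑ i, ∑ i', ∑ j, ∑ j', ∑ k, ∑ k', ∑ l, ∑ l', f i i' j j' k k' l l' =
    ∑ j, ∑ j', ∑ k, ∑ k', ∑ l, ∑ l', ∑ i, ∑ i', f i i' j j' k k' l l' := by
  have h := Finset.sum_comm (s := (univ : Finset (Fin n × Fin n)))
    (t := (univ : Finset (Fin n × Fin n × Fin n × Fin n × Fin n × Fin n)))
    (f := fun a b => f a.1 a.2 b.1 b.2.1 b.2.2.1 b.2.2.2.1 b.2.2.2.2.1 b.2.2.2.2.2)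
  simpa only [Fintype.sum_prod_type] using h

lemma sum_split {ι : Type*} [Fintype ι] (w a b c d : ι → ℝ) :
    ∑ x, w x * (a x + b x - c x - d x) =
      ∑ x, w x * a x + ∑ x, w x * b x - ∑ x, w x * c x - ∑ x, w x * d x := by
  simp only [← sum_add_distrib, ← sum_sub_distrib]
  exact sum_congr rfl fun x _ => by ring

/-- The contraction over the four outer index pairs of the square of
`∑ G_{tt'} (γ_{plt} γ_{t'kj} - γ_{pkt} γ_{t'lj})`, expanded: the products of matching and of
crossed terms are complete contractions of four copies of `γ`, and agree with those on the
right-hand side after renaming the dummy indices. -/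
lemma contraction_identity (G : Matrix (Fin n) (Fin n) ℝ) (c : Fin n → Fin n → Fin n → ℝ)
    (h12 : ∀ i j k, c i j k = c j i k) (h23 : ∀ i j k, c i j k = c i k j)
    (W : Fin n → Fin n → Fin n → Fin n → ℝ)
    (hW : ∀ p j k l, W p j k l =
      ∑ t, ∑ t', G t t' * (c p l t * c t' k j - c p k t * c t' l j)) :
    ∑ j, ∑ j', ∑ k, ∑ k', ∑ l, ∑ l', ∑ p, ∑ p',
      G p p' * G j j' * G k k' * G l l' * (W p j k l * W p' j' k' l') =
    ∑ r, ∑ r', ∑ p, ∑ p', ∑ t, ∑ t', ∑ i, ∑ i', ∑ j, ∑ j', ∑ k, ∑ k',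
      G r r' * G p p' * G t t' * G i i' * G j j' * G k k' *
        (c r p t * c t' i r' * c p' j k * c i' j' k'
          + c r p t * c t' i j * c r' p' k * c i' j' k'
          - c r j t * c t' i p * c r' p' k * c i' j' k'
          - c r k t * c t' i p * c r' j p' * c i' j' k') := by
  have expand : ∀ p p' j j' k k' l l',
      G p p' * G j j' * G k k' * G l l' * (W p j k l * W p' j' k' l') =
      ∑ s, ∑ s', ∑ t, ∑ t', G p p' * G j j' * G k k' * G l l' * G t t' * G s s' *
        ((c p l t * c t' k j) * (c p' l' s * c s' k' j')
          + (c p k t * c t' l j) * (c p' k' s * c s' l' j')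
          - (c p l t * c t' k j) * (c p' k' s * c s' l' j')
          - (c p k t * c t' l j) * (c p' l' s * c s' k' j')) := by
    intro p p' j j' k k' l l'
    rw [hW, hW]
    simp only [Finset.sum_mul, Finset.mul_sum]
    refine sum_congr rfl fun s _ => sum_congr rfl fun s' _ => sum_congr rfl fun t _ =>
      sum_congr rfl fun t' _ => ?_
    ring
  conv_lhs =>
    enter [2, j, 2, j', 2, k, 2, k', 2, l, 2, l', 2, p, 2, p']
    rw [expand]
  rw [sum_twelve, sum_twelve]
  rw [sum_split, sum_split]
  -- Each equivalence permutes the six contracted pairs; the source lists them as `j k l p s t`,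
  -- the target as `r p t i j k`.
  congr 1; congr 1; congr 1
  · refine Fintype.sum_equiv ⟨fun ⟨j, k, l, p, s, t⟩ => ⟨p, t, l, s, k, j⟩,
      fun ⟨p, t, l, s, k, j⟩ => ⟨j, k, l, p, s, t⟩, fun _ => rfl, fun _ => rfl⟩ _ _ ?_
    rintro ⟨⟨j, j'⟩, ⟨k, k'⟩, ⟨l, l'⟩, ⟨p, p'⟩, ⟨s, s'⟩, ⟨t, t'⟩⟩
    simp only [Equiv.coe_fn_mk]
    rw [h23 p l t, h23 p' l' s, h12 p' s l', h23 s p' l', h12 s l' p']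
    ring
  · refine Fintype.sum_equiv ⟨fun ⟨j, k, l, p, s, t⟩ => ⟨p, k, t, l, j, s⟩,
      fun ⟨p, k, t, l, j, s⟩ => ⟨j, k, l, p, s, t⟩, fun _ => rfl, fun _ => rfl⟩ _ _ ?_
    rintro ⟨⟨j, j'⟩, ⟨k, k'⟩, ⟨l, l'⟩, ⟨p, p'⟩, ⟨s, s'⟩, ⟨t, t'⟩⟩
    simp only [Equiv.coe_fn_mk]
    rw [h12 s' l' j', h23 l' s' j']
    ring
  · refine Fintype.sum_equiv ⟨fun ⟨j, k, l, p, s, t⟩ => ⟨p, k, t, j, l, s⟩,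
      fun ⟨p, k, t, j, l, s⟩ => ⟨j, k, l, p, s, t⟩, fun _ => rfl, fun _ => rfl⟩ _ _ ?_
    rintro ⟨⟨j, j'⟩, ⟨k, k'⟩, ⟨l, l'⟩, ⟨p, p'⟩, ⟨s, s'⟩, ⟨t, t'⟩⟩
    simp only [Equiv.coe_fn_mk]
    rw [h23 t' k j, h23 s' l' j', h12 s' j' l', h23 j' s' l']
    ring
  · refine Fintype.sum_equiv ⟨fun ⟨j, k, l, p, s, t⟩ => ⟨p, l, t, j, s, k⟩,
      fun ⟨p, l, t, j, s, k⟩ => ⟨j, k, l, p, s, t⟩, fun _ => rfl, fun _ => rfl⟩ _ _ ?_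
    rintro ⟨⟨j, j'⟩, ⟨k, k'⟩, ⟨l, l'⟩, ⟨p, p'⟩, ⟨s, s'⟩, ⟨t, t'⟩⟩
    simp only [Equiv.coe_fn_mk]
    rw [h23 t' l j, h23 p' l' s, h23 s' k' j', h12 s' j' k']
    ring

/-! ### Symmetry and smoothness of `g` and `γ` -/

lemma contDiff_pd {f : (Fin n → ℝ) → ℝ} (hf : ContDiff ℝ (⊤ : ℕ∞) f) (i : Fin n) :
    ContDiff ℝ (⊤ : ℕ∞) (pd i f) :=
  (hf.fderiv_right (m := (⊤ : ℕ∞)) (by simp)).clm_apply contDiff_const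

lemma pd_comm {f : (Fin n → ℝ) → ℝ} (hf : ContDiff ℝ (⊤ : ℕ∞) f) (i j : Fin n) :
    pd i (pd j f) = pd j (pd i f) := by
  funext x
  have hd : DifferentiableAt ℝ (fderiv ℝ f) x :=
    ((hf.fderiv_right (m := (⊤ : ℕ∞)) (by simp)).differentiable (by simp)) x
  have key : ∀ a b : Fin n, pd a (pd b f) x =
      fderiv ℝ (fderiv ℝ f) x (Pi.single a 1) (Pi.single b 1) := by
    intro a b
    unfold pd
    rw [fderiv_clm_apply hd (differentiableAt_const _)]
    simp
  rw [key, key]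
  exact (hf.contDiffAt.isSymmSndFDerivAt
    (by simpa using WithTop.coe_le_coe.mpr (le_top : (2 : ℕ∞) ≤ ⊤))) _ _

lemma gam_symm₁₂ {φ : (Fin n → ℝ) → ℝ} (hφ : ContDiff ℝ (⊤ : ℕ∞) φ) (i j k : Fin n) :
    gam φ i j k = gam φ j i k := by
  unfold gam
  rw [pd_comm (contDiff_pd hφ k)]

lemma gam_symm₂₃ {φ : (Fin n → ℝ) → ℝ} (hφ : ContDiff ℝ (⊤ : ℕ∞) φ) (i j k : Fin n) :
    gam φ i j k = gam φ i k j := by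
  unfold gam
  rw [pd_comm hφ]

lemma gmet_symm {φ : (Fin n → ℝ) → ℝ} (hφ : ContDiff ℝ (⊤ : ℕ∞) φ) (x : Fin n → ℝ)
    (i j : Fin n) : gmet φ x i j = gmet φ x j i := by
  unfold gmet
  rw [pd_comm hφ]

lemma differentiable_gmet {φ : (Fin n → ℝ) → ℝ} (hφ : ContDiff ℝ (⊤ : ℕ∞) φ) (i j : Fin n) :
    Differentiable ℝ (fun x => gmet φ x i j) :=
  (contDiff_pd (contDiff_pd hφ j) i).differentiable (by simp)

lemma differentiable_gam {φ : (Fin n → ℝ) → ℝ} (hφ : ContDiff ℝ (⊤ : ℕ∞) φ) (i j k : Fin n) :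
    Differentiable ℝ (gam φ i j k) :=
  ((contDiff_pd (contDiff_pd (contDiff_pd hφ k) j) i).differentiable (by simp)).const_mul _

lemma pd_gmet (φ : (Fin n → ℝ) → ℝ) (x : Fin n → ℝ) (i j k : Fin n) :
    pd k (fun y => gmet φ y i j) x = 2 * gam φ k i j x := by
  unfold gam gmet pd
  ring

lemma pd_gam_comm {φ : (Fin n → ℝ) → ℝ} (hφ : ContDiff ℝ (⊤ : ℕ∞) φ) (x : Fin n → ℝ)
    (a j k l : Fin n) : pd k (gam φ a l j) x = pd l (gam φ a k j) x := by
  have h : ∀ b c : Fin n, pd b (gam φ a c j) x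
      = (1 / 2) * pd b (pd c (pd a (pd j φ))) x := by
    intro b c
    rw [gam_symm₁₂ hφ]
    unfold gam
    have hd := ((contDiff_pd (contDiff_pd (contDiff_pd hφ j) a) c).differentiable (by simp)) x
    change fderiv ℝ _ x _ = _ * fderiv ℝ _ x _
    rw [fderiv_const_mul hd]
    simp
  rw [h, h, pd_comm (contDiff_pd (contDiff_pd hφ j) a)]

lemma differentiableAt_det {M : (Fin n → ℝ) → Matrix (Fin n) (Fin n) ℝ} {x : Fin n → ℝ}
    (hM : ∀ i j, DifferentiableAt ℝ (fun y => M y i j) x) :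
    DifferentiableAt ℝ (fun y => (M y).det) x := by
  simp only [Matrix.det_apply']
  refine DifferentiableAt.fun_sum fun σ _ => DifferentiableAt.const_mul ?_ _
  exact (HasFDerivAt.finsetProd fun i _ => (hM (σ i) i).hasFDerivAt).differentiableAt

lemma differentiableAt_gi {φ : (Fin n → ℝ) → ℝ} (hφ : ContDiff ℝ (⊤ : ℕ∞) φ) {x : Fin n → ℝ}
    (hx : (gmet φ x).det ≠ 0) (i j : Fin n) :
    DifferentiableAt ℝ (fun y => gi φ y i j) x := by
  have hdet : DifferentiableAt ℝ (fun y => (gmet φ y).det) x :=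
    differentiableAt_det fun a b => differentiable_gmet hφ a b x
  have hadj : DifferentiableAt ℝ (fun y => (gmet φ y).adjugate i j) x := by
    simp only [Matrix.adjugate_apply]
    refine differentiableAt_det fun a b => ?_
    simp only [Matrix.updateRow_apply]
    split_ifs
    · exact differentiableAt_const _
    · exact differentiable_gmet hφ a b x
  simp only [gi, Matrix.inv_def, Ring.inverse_eq_inv', Matrix.smul_apply, smul_eq_mul]
  exact (hdet.inv hx).mul hadj

/-! ### The lowered curvature tensor -/

/-- Lowering the upper index of the Christoffel symbols recovers `γ`. -/
lemma sum_gmet_mul_Chr (φ : (Fin n → ℝ) → ℝ) {x : Fin n → ℝ}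
    (hx : (gmet φ x).det ≠ 0) (a l j : Fin n) :
    ∑ p, gmet φ x a p * Chr φ p l j x = gam φ a l j x := by
  have h : gmet φ x * gi φ x = 1 := Matrix.mul_nonsing_inv _ (isUnit_iff_ne_zero.mpr hx)
  have := congrFun (congrArg (fun M => M.mulVec (fun q => gam φ q l j x)) h) a
  simp only [← Matrix.mulVec_mulVec, Matrix.one_mulVec] at this
  exact this

/-- The product rule applied to `∑ g_{ap} Γ^p_{lj} = γ_{alj}`. -/
lemma sum_gmet_mul_pd_Chr {φ : (Fin n → ℝ) → ℝ} (hφ : ContDiff ℝ (⊤ : ℕ∞) φ) {x : Fin n → ℝ}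
    (hx : ∀ᶠ y in nhds x, (gmet φ y).det ≠ 0) (a k l j : Fin n) :
    ∑ p, gmet φ x a p * pd k (Chr φ p l j) x =
      pd k (gam φ a l j) x - 2 * ∑ p, gam φ k a p x * Chr φ p l j x := by
  have hC : ∀ p, DifferentiableAt ℝ (Chr φ p l j) x := fun p =>
    DifferentiableAt.fun_sum fun q _ =>
      (differentiableAt_gi hφ hx.self_of_nhds p q).mul (differentiable_gam hφ q l j x)
  have heq : (fun y => ∑ p, gmet φ y a p * Chr φ p l j y) =ᶠ[nhds x] gam φ a l j :=
    hx.mono fun y hy => sum_gmet_mul_Chr φ hy a l j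
  have hd := congrArg (fun L : (Fin n → ℝ) →L[ℝ] ℝ => L (Pi.single k (1 : ℝ))) heq.fderiv_eq
  have hg : ∀ p, DifferentiableAt ℝ (fun y => gmet φ y a p) x := fun p =>
    differentiable_gmet hφ a p x
  rw [fderiv_fun_sum fun p _ => (hg p).fun_mul (hC p)] at hd
  simp only [fun p => fderiv_fun_mul (hg p) (hC p), _root_.sum_apply,
    _root_.add_apply, _root_.smul_apply, smul_eq_mul] at hd
  change ∑ p, (gmet φ x a p * pd k (Chr φ p l j) x +
    Chr φ p l j x * pd k (fun y => gmet φ y a p) x) = pd k (gam φ a l j) x at hd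
  rw [← hd, mul_sum, ← sum_sub_distrib]
  refine sum_congr rfl fun p _ => ?_
  rw [pd_gmet]
  ring

/-- The curvature tensor with its upper index lowered: the fourth derivatives of `φ` cancel,
and what remains is quadratic in `γ`. -/
lemma sum_gmet_mul_Riem {φ : (Fin n → ℝ) → ℝ} (hφ : ContDiff ℝ (⊤ : ℕ∞) φ) {x : Fin n → ℝ}
    (hx : ∀ᶠ y in nhds x, (gmet φ y).det ≠ 0) (a j k l : Fin n) :
    ∑ i, gmet φ x a i * Riem φ i j k l x =
      ∑ t, ∑ t', gi φ x t t' *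
        (gam φ a l t x * gam φ t' k j x - gam φ a k t x * gam φ t' l j x) := by
  have quad : ∀ k l : Fin n, ∑ i, gmet φ x a i * ∑ r, Chr φ i k r x * Chr φ r l j x =
      ∑ r, gam φ a k r x * Chr φ r l j x := by
    intro k l
    simp only [mul_sum]
    rw [sum_comm]
    refine sum_congr rfl fun r _ => ?_
    rw [← sum_gmet_mul_Chr φ hx.self_of_nhds a k r, sum_mul]
    exact sum_congr rfl fun i _ => by ring
  have lhs : ∑ i, gmet φ x a i * Riem φ i j k l x =
      (∑ i, gmet φ x a i * pd k (Chr φ i l j) x) - (∑ i, gmet φ x a i * pd l (Chr φ i k j) x)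
      + ((∑ i, gmet φ x a i * ∑ r, Chr φ i k r x * Chr φ r l j x)
      - ∑ i, gmet φ x a i * ∑ r, Chr φ i l r x * Chr φ r k j x) := by
    simp only [Riem, sum_sub_distrib, mul_add, mul_sub, sum_add_distrib]
  have rhs : ∑ t, ∑ t', gi φ x t t' *
        (gam φ a l t x * gam φ t' k j x - gam φ a k t x * gam φ t' l j x) =
      (∑ r, gam φ a l r x * Chr φ r k j x) - ∑ r, gam φ a k r x * Chr φ r l j x := by
    simp only [Chr, mul_sum]
    rw [← sum_sub_distrib]
    refine sum_congr rfl fun t _ => ?_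
    rw [← sum_sub_distrib]
    exact sum_congr rfl fun t' _ => by ring
  rw [lhs, rhs, quad, quad, sum_gmet_mul_pd_Chr hφ hx, sum_gmet_mul_pd_Chr hφ hx,
    pd_gam_comm hφ x a j k l]
  simp only [fun b p => gam_symm₁₂ hφ b a p]
  ring

/-! ### Lowering an index in a pairing -/

/-- If `w_a = ∑ g_{ai} u^i` and `w'_a = ∑ g_{ai} u'^i`, then the `g`-pairing of `u` and `u'`
is the `g⁻¹`-pairing of `w` and `w'`. -/
lemma pairing_lower (A : Matrix (Fin n) (Fin n) ℝ) (hA : A.det ≠ 0) (hs : A.transpose = A)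
    (u u' : Fin n → ℝ) :
    ∑ i, ∑ i', A i i' * (u i * u' i') =
      ∑ p, ∑ p', A⁻¹ p p' * (A.mulVec u p * A.mulVec u' p') := by
  have hl : ∑ i, ∑ i', A i i' * (u i * u' i') = u ⬝ᵥ A.mulVec u' := by
    simp only [dotProduct, Matrix.mulVec, mul_sum]
    exact sum_congr rfl fun i _ => sum_congr rfl fun i' _ => by ring
  have hr : ∑ p, ∑ p', A⁻¹ p p' * (A.mulVec u p * A.mulVec u' p') =
      A.mulVec u ⬝ᵥ A⁻¹.mulVec (A.mulVec u') := by
    simp only [dotProduct]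
    refine sum_congr rfl fun i _ => ?_
    rw [Matrix.mulVec.eq_1 A⁻¹, dotProduct, mul_sum]
    exact sum_congr rfl fun i' _ => by ring
  rw [hl, hr, Matrix.mulVec_mulVec, Matrix.nonsing_inv_mul _ (isUnit_iff_ne_zero.mpr hA),
    Matrix.one_mulVec, Matrix.dotProduct_mulVec, ← Matrix.mulVec_transpose, hs]

end HessianCurvature

theorem normRmSq_formula {n : ℕ} (hn : 1 ≤ n) (φ : (Fin n → ℝ) → ℝ)
    (hφ : ContDiff ℝ (⊤ : ℕ∞) φ) (Ω : Set (Fin n → ℝ)) (hΩ : IsOpen Ω)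
    (hconn : IsConnected Ω) (hpos : ∀ x ∈ Ω, (gmet φ x).PosDef) :
    ∀ x ∈ Ω,
      normRmSq φ x
        = ∑ r, ∑ r', ∑ p, ∑ p', ∑ t, ∑ t', ∑ i, ∑ i', ∑ j, ∑ j', ∑ k, ∑ k',
            gi φ x r r' * gi φ x p p' * gi φ x t t' * gi φ x i i' * gi φ x j j' *
              gi φ x k k' *
              (gam φ r p t x * gam φ t' i r' x * gam φ p' j k x * gam φ i' j' k' x
                + gam φ r p t x * gam φ t' i j x * gam φ r' p' k x * gam φ i' j' k' x
                - gam φ r j t x * gam φ t' i p x * gam φ r' p' k x * gam φ i' j' k' x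
                - gam φ r k t x * gam φ t' i p x * gam φ r' j p' x * gam φ i' j' k' x) := by
  intro x hx
  have hev : ∀ᶠ y in nhds x, (gmet φ y).det ≠ 0 :=
    (hΩ.eventually_mem hx).mono fun y hy => (hpos y hy).det_pos.ne'
  have hs : (gmet φ x).transpose = gmet φ x := by
    ext i j
    exact HessianCurvature.gmet_symm hφ x j i
  rw [← HessianCurvature.contraction_identity (gi φ x) (fun i j k => gam φ i j k x)
    (fun i j k => congrFun (HessianCurvature.gam_symm₁₂ hφ i j k) x)
    (fun i j k => congrFun (HessianCurvature.gam_symm₂₃ hφ i j k) x)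
    (fun a j k l => (gmet φ x).mulVec (fun i => Riem φ i j k l x) a)
    (fun a j k l => HessianCurvature.sum_gmet_mul_Riem hφ hev a j k l)]
  unfold normRmSq
  rw [HessianCurvature.sum_eight_comm]
  refine Finset.sum_congr rfl fun j _ => Finset.sum_congr rfl fun j' _ =>
    Finset.sum_congr rfl fun k _ => Finset.sum_congr rfl fun k' _ =>
    Finset.sum_congr rfl fun l _ => Finset.sum_congr rfl fun l' _ => ?_
  have h := congrArg (fun z => gi φ x j j' * gi φ x k k' * gi φ x l l' * z)
    (HessianCurvature.pairing_lower (gmet φ x) hev.self_of_nhds hs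
      (fun i => Riem φ i j k l x) (fun i => Riem φ i j' k' l' x))
  simp only [Finset.mul_sum] at h
  calc _ = _ := Finset.sum_congr rfl fun i _ => Finset.sum_congr rfl fun i' _ => by ring
    _ = _ := h
    _ = _ := Finset.sum_congr rfl fun p _ => Finset.sum_congr rfl fun p' _ => by
      simp only [gi]
      ring

end
end

section
/- The dual space of a Hesse soliton is a Hesse soliton: suppose X = (X^k) is a smooth vector field on Ω with lowered components X_j = Σ_k g_{jk}X^k satisfying β_{ij} − (1/2)(∇_iX_j + ∇_jX_i) = λ g_{ij} on Ω for some λ ∈ ℝ. Let Y be the vector field with lowered components Y_j = X_j − 2α_j (that is, Y = X − 2α♯). Then β'_{ij} − (1/2)(∇_iY_j + ∇_jY_i) = λ g_{ij} at every point of Ω, where β'_{ij} = β_{ij} − 2∇_iα_j is the second Koszul form of the dual connection D' = 2∇ − D. -/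
/-!
Since `∇` is linear over constants on differentiable covector fields,
`∇_i Y_j = ∇_i X_j - 2 ∇_i α_j` (`covCo_sub_two_alph`). The dual soliton equation therefore differs
from the given one only by `-2 ∇_i α_j + (∇_i α_j + ∇_j α_i)`, which vanishes once `∇α` is
symmetric. As `Γ^r_{ij}` is symmetric in `i, j` (`Chr_symm`), this amounts to the symmetry of
`β_{ij}`, that is, to `α` being closed. Closedness always holds, because `α = (1/2) d log det g`,
but no computation of this logarithmic derivative is needed here: the given equation writes `β` as
a sum of two symmetric tensors, `λ g` and the symmetrization of `∇X`.

The remaining point is that `pd` is a genuine derivative, i.e. that `α` and the lowered field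
`X_j` are differentiable on `Ω`; for `α` this uses Cramer's formula for `g^{ij}` together with
`det g ≠ 0`.
-/

noncomputable section

variable {n : ℕ}

/-- The lowered components `X_j = Σ_k g_{jk} X^k` of a vector field `X`. -/
def lowered {n : ℕ} (φ : (Fin n → ℝ) → ℝ) (X : Fin n → (Fin n → ℝ) → ℝ) (j : Fin n) :
    (Fin n → ℝ) → ℝ :=
  fun x => ∑ k, gmet φ x j k * X k x

variable {n : ℕ}

theorem pd_contDiff {f : (Fin n → ℝ) → ℝ} (hf : ContDiff ℝ (⊤ : ℕ∞) f) (i : Fin n) :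
    ContDiff ℝ (⊤ : ℕ∞) (pd i f) :=
  (hf.fderiv_right (m := (⊤ : ℕ∞)) (by simp)).clm_apply contDiff_const

theorem pd_comm_s13 {f : (Fin n → ℝ) → ℝ} (hf : ContDiff ℝ (⊤ : ℕ∞) f) (i j : Fin n) :
    pd i (pd j f) = pd j (pd i f) := by
  have hd : Differentiable ℝ (fderiv ℝ f) :=
    (hf.fderiv_right (m := (⊤ : ℕ∞)) (by simp)).differentiable (by simp)
  have key : ∀ (a b : Fin n) (x : Fin n → ℝ),
      pd a (pd b f) x = fderiv ℝ (fderiv ℝ f) x (Pi.single a 1) (Pi.single b 1) := by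
    intro a b x
    unfold pd
    rw [fderiv_clm_apply (hd x) (differentiableAt_const _)]
    simp
  funext x
  have hs : IsSymmSndFDerivAt ℝ f x :=
    hf.contDiffAt.isSymmSndFDerivAt (by simpa using WithTop.coe_le_coe.2 (le_top : (2 : ℕ∞) ≤ ⊤))
  rw [key, key, hs.eq]

theorem Chr_symm {φ : (Fin n → ℝ) → ℝ} (hφ : ContDiff ℝ (⊤ : ℕ∞) φ) (r i j : Fin n)
    (x : Fin n → ℝ) : Chr φ r i j x = Chr φ r j i x := by
  simp only [Chr, gam, pd_comm_s13 hφ i j]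

theorem gmet_symm {φ : (Fin n → ℝ) → ℝ} (hφ : ContDiff ℝ (⊤ : ℕ∞) φ) (i j : Fin n)
    (x : Fin n → ℝ) : gmet φ x i j = gmet φ x j i := by
  simp only [gmet, pd_comm_s13 hφ i j]

theorem gmet_differentiable {φ : (Fin n → ℝ) → ℝ} (hφ : ContDiff ℝ (⊤ : ℕ∞) φ) (i j : Fin n) :
    Differentiable ℝ (fun x => gmet φ x i j) :=
  (pd_contDiff (pd_contDiff hφ j) i).differentiable (by simp)

theorem differentiableAt_det {A : (Fin n → ℝ) → Matrix (Fin n) (Fin n) ℝ} {x : Fin n → ℝ}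
    (hA : ∀ i j, DifferentiableAt ℝ (fun y => A y i j) x) :
    DifferentiableAt ℝ (fun y => (A y).det) x := by
  simp only [Matrix.det_apply']
  refine DifferentiableAt.fun_sum fun σ _ => ?_
  refine (differentiableAt_const _).mul ?_
  exact (HasFDerivAt.finsetProd (g := fun i y => A y (σ i) i)
    fun i _ => (hA (σ i) i).hasFDerivAt).differentiableAt

theorem gi_differentiableAt {φ : (Fin n → ℝ) → ℝ} (hφ : ContDiff ℝ (⊤ : ℕ∞) φ) {x : Fin n → ℝ}
    (hx : (gmet φ x).det ≠ 0) (i j : Fin n) : DifferentiableAt ℝ (fun y => gi φ y i j) x := by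
  have hg : ∀ a b, DifferentiableAt ℝ (fun y => gmet φ y a b) x := fun a b =>
    gmet_differentiable hφ a b x
  simp only [gi, Matrix.inv_def, Matrix.smul_apply, smul_eq_mul, Ring.inverse_eq_inv',
    Matrix.adjugate_apply]
  refine ((differentiableAt_det hg).inv hx).mul (differentiableAt_det fun a b => ?_)
  by_cases h : a = j
  · subst h
    simp
  · simpa [Matrix.updateRow_ne h] using hg a b

theorem alph_differentiableAt {φ : (Fin n → ℝ) → ℝ} (hφ : ContDiff ℝ (⊤ : ℕ∞) φ)
    {x : Fin n → ℝ} (hx : (gmet φ x).det ≠ 0) (i : Fin n) : DifferentiableAt ℝ (alph φ i) x := by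
  unfold alph
  refine DifferentiableAt.fun_sum fun r _ => DifferentiableAt.fun_sum fun p _ => ?_
  refine (gi_differentiableAt hφ hx r p).mul ((differentiableAt_const _).mul ?_)
  exact (pd_contDiff (pd_contDiff (pd_contDiff hφ i) r) p).differentiable (by simp) x

theorem lowered_differentiable {φ : (Fin n → ℝ) → ℝ} (hφ : ContDiff ℝ (⊤ : ℕ∞) φ)
    {X : Fin n → (Fin n → ℝ) → ℝ} (hX : ∀ k, ContDiff ℝ (⊤ : ℕ∞) (X k)) (j : Fin n) :
    Differentiable ℝ (lowered φ X j) := by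
  intro x
  unfold lowered
  exact DifferentiableAt.fun_sum fun k _ =>
    (gmet_differentiable hφ j k x).mul ((hX k).differentiable (by simp) x)

/-- Linearity of `∇` on covector fields, in the form `∇_i (Z - 2α)_j = ∇_i Z_j - 2 ∇_i α_j`. -/
theorem covCo_sub_two_alph {φ : (Fin n → ℝ) → ℝ} {Z : Fin n → (Fin n → ℝ) → ℝ} {x : Fin n → ℝ}
    (hZ : ∀ j, DifferentiableAt ℝ (Z j) x) (hα : ∀ j, DifferentiableAt ℝ (alph φ j) x)
    (i j : Fin n) :
    covCo φ (fun l y => Z l y - 2 * alph φ l y) i j x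
      = covCo φ Z i j x - 2 * covAlpha φ i j x := by
  have hpd : pd i (fun y => Z j y - 2 * alph φ j y) x
      = pd i (Z j) x - 2 * pd i (alph φ j) x := by
    unfold pd
    rw [fderiv_fun_sub (hZ j) ((hα j).const_mul 2), fderiv_const_mul (hα j)]
    simp
  simp only [covCo, covAlpha, bet, hpd, mul_sub, Finset.sum_sub_distrib, Finset.mul_sum]
  simp only [mul_left_comm (2 : ℝ)]
  ring

theorem dual_of_hesse_soliton {n : ℕ} (hn : 1 ≤ n) (φ : (Fin n → ℝ) → ℝ)
    (hφ : ContDiff ℝ (⊤ : ℕ∞) φ) (Ω : Set (Fin n → ℝ)) (hΩ : IsOpen Ω)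
    (hconn : IsConnected Ω) (hpos : ∀ x ∈ Ω, (gmet φ x).PosDef)
    (X : Fin n → (Fin n → ℝ) → ℝ) (hX : ∀ k, ContDiff ℝ (⊤ : ℕ∞) (X k)) (lam : ℝ)
    (hsol : ∀ x ∈ Ω, ∀ i j,
      bet φ i j x -
        (1 / 2) * (covCo φ (lowered φ X) i j x + covCo φ (lowered φ X) j i x)
        = lam * gmet φ x i j) :
    ∀ x ∈ Ω, ∀ i j,
      (bet φ i j x - 2 * covAlpha φ i j x) -
        (1 / 2) * (covCo φ (fun l y => lowered φ X l y - 2 * alph φ l y) i j x +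
          covCo φ (fun l y => lowered φ X l y - 2 * alph φ l y) j i x)
        = lam * gmet φ x i j := by
  intro x hx i j
  have hdet : (gmet φ x).det ≠ 0 := (hpos x hx).det_pos.ne'
  have hα := fun l => alph_differentiableAt hφ hdet l
  have hL := fun l => lowered_differentiable hφ hX l x
  have hβ : bet φ i j x = bet φ j i x := by
    linarith [hsol x hx i j, hsol x hx j i, congrArg (lam * ·) (gmet_symm hφ i j x)]
  have hcov : covAlpha φ i j x = covAlpha φ j i x := by
    simp only [covAlpha, hβ, Chr_symm hφ _ i j]
  rw [covCo_sub_two_alph hL hα, covCo_sub_two_alph hL hα]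
  linarith [hsol x hx i j]
end
end
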